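/- arXiv:1007.4584 — 3 statements merged into one kernel-verified Lean document; each statement's English description precedes it below -/
import Mathlib

section
/- For all n ≥ 2 and n-1 ≤ k ≤ 2n-3, the rational expression c(n,k;q) = (1/[n-1]_q) * qbinom(3n-3, n+k) * qbinom(k-1, n-2) is a polynomial in q with nonnegative integer coefficients. -/
/-- The Gaussian binomial coefficient as a polynomial in `q` over `ℤ`, via the
`q`-Pascal recursion `[n+1, k+1]_q = [n, k]_q + q^(k+1)·[n, k+1]_q`. -/
noncomputable def gauss : ℕ → ℕ → Polynomial ℤ
  | _, 0 => 1
  | 0, _ + 1 => 0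
  | n + 1, k + 1 => gauss n k + Polynomial.X ^ (k + 1) * gauss n (k + 1)

/-!
Write `f` for the product of the two Gaussian binomials and `[m]` for `[n - 1]_q`.

Divisibility is a Euclidean algorithm on `q`-integers: absorbing `[n + k]` into the first binomial
and `[k - n + 1]` into the second one shows that `[m]` divides `[n + k] f` and `[k - n + 1] f`,
hence also `[g] f`, where `g = gcd(n + k, k - n + 1, n - 1) = 1`.

For positivity, a power of `q` times `f` counts pairs of subsets of two chains by the sum of their
elements. On the space spanned by such pairs there is a raising operator `E` for which `E`, `Eᵀ`
generate an action of `sl₂`, the commutator `[E, Eᵀ]` being the scalar `d - 2 w` in rank `w`. So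
`E Eᵀ` is positive definite below the middle rank and `Eᵀ E` above it, and `f` is unimodal. If
`f = [m] p` then `(1 - q) f = (1 - q ^ m) p`, so `p_w - p_(w - m) = f_w - f_(w - 1)`; the right hand
side is nonnegative up to the middle and nonpositive beyond, and induction on `w` from either end
gives `p_w ≥ 0`.
-/

open Polynomial Finset

section QIntegers

/-- The `q`-integer `[n]_q = 1 + q + ⋯ + q ^ (n - 1)`. -/
noncomputable def qNat (n : ℕ) : ℤ[X] := ∑ i ∈ range n, X ^ i

lemma qNat_add (m n : ℕ) : qNat (m + n) = qNat m + X ^ m * qNat n := by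
  simp only [qNat, sum_range_add, mul_sum, pow_add]

@[simp] lemma qNat_zero : qNat 0 = 0 := by simp [qNat]

@[simp] lemma qNat_one : qNat 1 = 1 := by simp [qNat]

lemma qNat_ne_zero {n : ℕ} (hn : n ≠ 0) : qNat n ≠ 0 := fun h => by
  simpa [qNat, hn] using congrArg (eval 1) h

lemma qNat_dvd_qNat {m n : ℕ} (h : m ∣ n) : qNat m ∣ qNat n := by
  obtain ⟨c, rfl⟩ := h
  induction c with
  | zero => simp
  | succ c ih => exact Nat.mul_succ m c ▸ qNat_add _ _ ▸ ih.add (dvd_mul_left _ _)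

lemma dvd_qNat_gcd_mul {f g : ℤ[X]} (a b : ℕ) (ha : f ∣ qNat a * g) (hb : f ∣ qNat b * g) :
    f ∣ qNat (a.gcd b) * g := by
  induction a, b using Nat.gcd.induction with
  | H0 b => simpa using hb
  | H1 a b _ ih =>
    rw [Nat.gcd_rec]
    refine ih ?_ ha
    have hmul : f ∣ qNat (a * (b / a)) * g :=
      ha.trans (mul_dvd_mul_right (qNat_dvd_qNat (dvd_mul_right _ _)) _)
    have hsplit : qNat b * g = qNat (b % a) * g + X ^ (b % a) * (qNat (a * (b / a)) * g) := by
      conv_lhs => rw [← Nat.mod_add_div b a, qNat_add]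
      ring
    exact (dvd_add_left (hmul.mul_left _)).1 (hsplit ▸ hb)

/-- The `q`-factorial `[n]_q! = [1]_q [2]_q ⋯ [n]_q`. -/
noncomputable def qFactorial (n : ℕ) : ℤ[X] := ∏ i ∈ range n, qNat (i + 1)

lemma qFactorial_succ (n : ℕ) : qFactorial (n + 1) = qFactorial n * qNat (n + 1) :=
  prod_range_succ _ _

lemma qFactorial_ne_zero (n : ℕ) : qFactorial n ≠ 0 :=
  prod_ne_zero_iff.2 fun i _ => qNat_ne_zero i.succ_ne_zero

lemma gauss_zero_right (n : ℕ) : gauss n 0 = 1 := by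
  cases n <;> rfl

lemma gauss_succ_succ (n k : ℕ) :
    gauss (n + 1) (k + 1) = gauss n k + X ^ (k + 1) * gauss n (k + 1) := rfl

lemma gauss_eq_zero_of_lt {n k : ℕ} (h : n < k) : gauss n k = 0 := by
  induction n generalizing k with
  | zero => cases k with
    | zero => omega
    | succ k => rfl
  | succ n ih => cases k with
    | zero => omega
    | succ k => simp [gauss_succ_succ, ih (k := k) (by omega), ih (k := k + 1) (by omega)]

lemma gauss_self (n : ℕ) : gauss n n = 1 := by
  induction n with
  | zero => rfl
  | succ n ih => rw [gauss_succ_succ, ih, gauss_eq_zero_of_lt n.lt_succ_self, mul_zero, add_zero]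

lemma qFactorial_mul_qFactorial_mul_gauss (k r : ℕ) :
    qFactorial k * qFactorial r * gauss (k + r) k = qFactorial (k + r) := by
  induction k generalizing r with
  | zero => simp [gauss_zero_right, qFactorial]
  | succ k ihk =>
    induction r with
    | zero => simp [gauss_self, qFactorial]
    | succ r ihr =>
      have hk := ihk (r + 1)
      rw [qFactorial_succ, ← add_assoc] at hk
      rw [qFactorial_succ, add_right_comm] at ihr
      have hsplit : qNat (k + r + 1 + 1) = qNat (k + 1) + X ^ (k + 1) * qNat (r + 1) := by
        rw [← qNat_add, add_add_add_comm, add_assoc (k + r)]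
      rw [← add_assoc, add_right_comm k 1 r, gauss_succ_succ, qFactorial_succ, qFactorial_succ,
        qFactorial_succ (k + r + 1), hsplit]
      linear_combination qNat (k + 1) * hk + X ^ (k + 1) * qNat (r + 1) * ihr

lemma qNat_dvd_qNat_mul_gauss (n k : ℕ) : qNat n ∣ qNat k * gauss n k := by
  obtain hnk | hkn := lt_or_ge n k
  · simp [gauss_eq_zero_of_lt hnk]
  obtain ⟨r, rfl⟩ := Nat.exists_eq_add_of_le hkn
  cases k with
  | zero => simp
  | succ k =>
    refine ⟨gauss (k + r) k, mul_left_cancel₀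
      (mul_ne_zero (qFactorial_ne_zero k) (qFactorial_ne_zero r)) ?_⟩
    have h := qFactorial_mul_qFactorial_mul_gauss (k + 1) r
    rw [add_right_comm, qFactorial_succ, qFactorial_succ] at h
    rw [add_right_comm]
    linear_combination h - qNat (k + r + 1) * qFactorial_mul_qFactorial_mul_gauss k r

lemma qNat_succ_dvd_qNat_mul_gauss (k r : ℕ) : qNat (k + 1) ∣ qNat r * gauss (k + r) k := by
  cases r with
  | zero => simp
  | succ r =>
    refine ⟨gauss (k + r + 1) (k + 1), mul_left_cancel₀
      (mul_ne_zero (qFactorial_ne_zero k) (qFactorial_ne_zero r)) ?_⟩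
    have hk := qFactorial_mul_qFactorial_mul_gauss k (r + 1)
    have hr := qFactorial_mul_qFactorial_mul_gauss (k + 1) r
    rw [qFactorial_succ] at hk hr
    rw [add_right_comm] at hr
    rw [← add_assoc] at hk ⊢
    linear_combination hk - hr

theorem qNat_dvd_gauss_mul_gauss {m N a l r : ℕ} (hN : m ∣ N) (hl : m ∣ l + 1)
    (h : (a.gcd r).Coprime m) : qNat m ∣ gauss N a * gauss (l + r) l := by
  set f := gauss N a * gauss (l + r) l with hf
  have ha : qNat m ∣ qNat a * f := by
    rw [hf, ← mul_assoc]
    exact ((qNat_dvd_qNat hN).trans (qNat_dvd_qNat_mul_gauss N a)).mul_right _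
  have hr : qNat m ∣ qNat r * f := by
    rw [hf, mul_left_comm]
    exact ((qNat_dvd_qNat hl).trans (qNat_succ_dvd_qNat_mul_gauss l r)).mul_left _
  simpa [h.gcd_eq_one] using
    dvd_qNat_gcd_mul _ _ (dvd_qNat_gcd_mul _ _ ha hr) (dvd_mul_right (qNat m) f)

end QIntegers

section Unimodal

/-- The coefficients of `f` weakly increase up to degree `d / 2` and weakly decrease from there on.
The centre is recorded by its double `d`, which may be odd; then the two middle coefficients
agree. -/
structure IsUnimodal {R : Type*} [Semiring R] [LE R] (f : R[X]) (d : ℤ) : Prop where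
  coeff_le_coeff_succ : ∀ w : ℕ, 2 * (w : ℤ) < d → f.coeff w ≤ f.coeff (w + 1)
  coeff_succ_le_coeff : ∀ w : ℕ, d < 2 * ((w : ℤ) + 1) → f.coeff (w + 1) ≤ f.coeff w

lemma coeff_succ_geom_sum_mul_sub {R : Type*} [CommRing R] (p : R[X]) (m u : ℕ) :
    ((∑ i ∈ range m, X ^ i) * p).coeff (u + 1) - ((∑ i ∈ range m, X ^ i) * p).coeff u =
      p.coeff (u + 1) - if m ≤ u + 1 then p.coeff (u + 1 - m) else 0 := by
  have h : (∑ i ∈ range m, X ^ i) * p - (∑ i ∈ range m, X ^ i) * p * X = p - p * X ^ m := by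
    linear_combination p * mul_neg_geom_sum (X : R[X]) m
  simpa [coeff_mul_X_pow', coeff_mul_X] using congrArg (coeff · (u + 1)) h

theorem IsUnimodal.coeff_nonneg_of_geom_sum_mul {R : Type*} [CommRing R] [PartialOrder R]
    [IsOrderedRing R] {p : R[X]} {m : ℕ} {d : ℤ} (hm : m ≠ 0)
    (hf : IsUnimodal ((∑ i ∈ range m, X ^ i) * p) d)
    (h0 : 0 ≤ ((∑ i ∈ range m, X ^ i) * p).coeff 0) (w : ℕ) :
    0 ≤ p.coeff w := by
  have low (u : ℕ) (hu : 2 * ((u : ℤ) - 1) < d) : 0 ≤ p.coeff u := by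
    induction u using Nat.strong_induction_on with
    | _ u ih =>
      cases u with
      | zero => simpa [mul_coeff_zero, Nat.pos_of_ne_zero hm] using h0
      | succ u =>
        have hup := sub_nonneg.2 (hf.coeff_le_coeff_succ u (by omega))
        rw [coeff_succ_geom_sum_mul_sub, sub_nonneg] at hup
        refine le_trans ?_ hup
        split_ifs
        · exact ih _ (by omega) (by omega)
        · exact le_rfl
  have high (s u : ℕ) (hs : p.natDegree < u + s) (hu : d < 2 * ((u : ℤ) + m)) :
      0 ≤ p.coeff u := by
    induction s generalizing u with
    | zero => exact (coeff_eq_zero_of_natDegree_lt hs).ge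
    | succ s ih =>
      have hdown := sub_nonpos.2 (hf.coeff_succ_le_coeff (u + m - 1) (by omega))
      rw [coeff_succ_geom_sum_mul_sub, show u + m - 1 + 1 = u + m by omega, if_pos (by omega),
        Nat.add_sub_cancel, sub_nonpos] at hdown
      exact (ih (u + m) (by omega) (by omega)).trans hdown
  obtain h | h := lt_or_ge (2 * ((w : ℤ) - 1)) d
  · exact low w h
  · exact high (p.natDegree + 1) w (by omega) (by omega)

lemma exists_map_natCast_eq_of_coeff_nonneg {p : ℤ[X]} (hp : ∀ w, 0 ≤ p.coeff w) :
    ∃ q : ℕ[X], q.map (Nat.castRingHom ℤ) = p :=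
  (mem_lifts p).1 <| (lifts_iff_coeff_lifts p).2 fun w => ⟨(p.coeff w).toNat, by simpa using hp w⟩

end Unimodal

lemma esymm_cons {R : Type*} [CommSemiring R] (x : R) (s : Multiset R) (k : ℕ) :
    (x ::ₘ s).esymm (k + 1) = x * s.esymm k + s.esymm (k + 1) := by
  simp [Multiset.esymm, Multiset.powersetCard_cons, Multiset.sum_map_mul_left, add_comm]

theorem esymm_X_pow (n k : ℕ) :
    ((univ : Finset (Fin n)).val.map fun i : Fin n => (X : ℤ[X]) ^ (i : ℕ)).esymm k =
      X ^ k.choose 2 * gauss n k := by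
  induction n generalizing k with
  | zero => cases k <;> simp [Multiset.esymm, gauss, Multiset.powersetCard_zero_right]
  | succ n ih =>
    have hcons : (univ.val.map fun i : Fin (n + 1) => (X : ℤ[X]) ^ (i : ℕ)) =
        1 ::ₘ (univ.val.map fun i : Fin n => (X : ℤ[X]) ^ (i : ℕ)).map ((X : ℤ[X]) • ·) := by
      simp [Fin.univ_succ, Function.comp_def, pow_succ']
    cases k with
    | zero => simp [Multiset.esymm, gauss]
    | succ k =>
      rw [hcons, esymm_cons, ← Multiset.pow_smul_esymm, ← Multiset.pow_smul_esymm, ih, ih,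
        gauss_succ_succ, Nat.choose_succ_succ' k 1, Nat.choose_one_right]
      simp only [smul_eq_mul]
      ring

open Matrix Kronecker Pointwise

attribute [local instance] LieRing.ofAssociativeRing

section Raising

variable {α β : Type*} [Fintype α] [Fintype β]

/-- The rank generating function `∑ a, q ^ rk a` of a finite type graded by `rk`. -/
noncomputable def rankPolynomial (rk : α → ℕ) : ℤ[X] := ∑ a, X ^ rk a

lemma coeff_rankPolynomial (rk : α → ℕ) (w : ℕ) :
    (rankPolynomial rk).coeff w = #{a | rk a = w} := by
  simp [rankPolynomial, coeff_X_pow, eq_comm]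

lemma rankPolynomial_prod (rk : α → ℕ) (rk' : β → ℕ) :
    rankPolynomial (fun x : α × β => rk x.1 + rk' x.2) =
      rankPolynomial rk * rankPolynomial rk' := by
  simp only [rankPolynomial, sum_mul_sum, Fintype.sum_prod_type, pow_add]

variable [DecidableEq α] [DecidableEq β]

lemma card_le_card_of_lie_transpose {E : Matrix α α ℝ} {h : α → ℝ}
    (hE : ⁅E, Eᵀ⁆ = diagonal h) {A B : Finset α} (hA : ∀ a ∈ A, 0 < h a)
    (hAB : ∀ a ∈ A, ∀ b, E a b ≠ 0 → b ∈ B) : #A ≤ #B := by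
  let M : Matrix A B ℝ := E.submatrix (↑) (↑)
  have hgram : M * Mᵀ = (Eᵀ * E).submatrix (↑) (↑) + diagonal fun a : A => h a := by
    rw [Ring.lie_def, sub_eq_iff_eq_add'] at hE
    ext a a'
    have hsum : (M * Mᵀ) a a' = (E * Eᵀ) a a' := by
      simp only [M, mul_apply, submatrix_apply, transpose_apply]
      rw [sum_coe_sort B fun b => E a b * E a' b]
      refine sum_subset (subset_univ B) fun b _ hb => ?_
      rw [not_ne_iff.1 (mt (hAB a a.2 b) hb), zero_mul]
    rw [hsum, hE]
    simp only [Matrix.add_apply, submatrix_apply, diagonal_apply, Subtype.ext_iff]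
  have hpos : (M * Mᵀ).PosDef := by
    rw [hgram]
    exact PosDef.posSemidef_add ((posSemidef_conjTranspose_mul_self E).submatrix _)
      (PosDef.diagonal fun a => hA a a.2)
  calc #A = (M * Mᵀ).rank := by rw [rank_of_isUnit _ hpos.isUnit, Fintype.card_coe]
    _ = M.rank := rank_self_mul_transpose M
    _ ≤ #B := M.rank_le_card_width.trans_eq (Fintype.card_coe B)

/-- `E` raises the grading `rk` by one, and `E`, `Eᵀ` generate an action of `sl₂` on `ℝ ^ α` in
which elements of rank `w` have weight `d - 2 w`. Rows index the source: `E a b` is the coefficient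
of `b` in the image of `a`. -/
structure IsRaising (rk : α → ℕ) (d : ℤ) (E : Matrix α α ℝ) : Prop where
  rank_eq : ∀ {a b}, E a b ≠ 0 → rk b = rk a + 1
  lie_transpose : ⁅E, Eᵀ⁆ = diagonal fun a => (d : ℝ) - 2 * rk a

namespace IsRaising

variable {rk : α → ℕ} {d : ℤ} {E : Matrix α α ℝ} {rk' : β → ℕ} {d' : ℤ} {F : Matrix β β ℝ}

theorem isUnimodal_rankPolynomial (hE : IsRaising rk d E) :
    IsUnimodal (rankPolynomial rk) d where
  coeff_le_coeff_succ w hw := by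
    rw [coeff_rankPolynomial, coeff_rankPolynomial, Nat.cast_le]
    refine card_le_card_of_lie_transpose hE.lie_transpose (fun a ha => ?_) fun a ha b hab => ?_
    · rw [mem_filter_univ] at ha
      rw [ha, sub_pos]
      exact_mod_cast hw
    · rw [mem_filter_univ] at ha ⊢
      rw [hE.rank_eq hab, ha]
  coeff_succ_le_coeff w hw := by
    rw [coeff_rankPolynomial, coeff_rankPolynomial, Nat.cast_le]
    have hlower : ⁅Eᵀ, Eᵀᵀ⁆ = diagonal fun a => -((d : ℝ) - 2 * rk a) := by
      rw [transpose_transpose, ← lie_skew, hE.lie_transpose, diagonal_neg]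
    refine card_le_card_of_lie_transpose hlower (fun a ha => ?_) fun a ha b hab => ?_
    · rw [mem_filter_univ] at ha
      rw [ha, neg_sub, sub_pos]
      exact_mod_cast hw
    · rw [mem_filter_univ] at ha ⊢
      exact Nat.succ_injective ((hE.rank_eq hab).symm.trans ha)

theorem prod (hE : IsRaising rk d E) (hF : IsRaising rk' d' F) :
    IsRaising (fun x : α × β => rk x.1 + rk' x.2) (d + d') (E ⊗ₖ 1 + 1 ⊗ₖ F) where
  rank_eq := by
    rintro ⟨a, b⟩ ⟨a', b'⟩ h
    have hEa := hE.rank_eq (a := a) (b := a')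
    have hFb := hF.rank_eq (a := b) (b := b')
    simp only [Matrix.add_apply, kroneckerMap_apply, Matrix.one_apply] at h
    grind
  lie_transpose := by
    have hdiag : (diagonal fun x : α × β => ((d + d' : ℤ) : ℝ) - 2 * (rk x.1 + rk' x.2 : ℕ)) =
        ⁅E, Eᵀ⁆ ⊗ₖ 1 + 1 ⊗ₖ ⁅F, Fᵀ⁆ := by
      rw [hE.lie_transpose, hF.lie_transpose, ← diagonal_one, ← diagonal_one,
        diagonal_kronecker_diagonal, diagonal_kronecker_diagonal, diagonal_add]
      congr 1
      ext x
      push_cast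
      ring
    rw [hdiag, transpose_add, ← kroneckerMap_transpose, ← kroneckerMap_transpose]
    simp only [transpose_one, Ring.lie_def, add_mul, mul_add, ← mul_kronecker_mul, one_mul, mul_one]
    ext x y
    simp only [Matrix.add_apply, Matrix.sub_apply, kroneckerMap_apply]
    ring

end IsRaising

end Raising

section Hop

variable {V : Type*} [DecidableEq V] {k : ℕ}

/-- The operator on `k`-subsets that moves a particle from `a` to `b`: it sends `S` to
`S \ {a} ∪ {b}` if `a ∈ S` and `b ∉ S`, and to `0` otherwise. As a matrix, rows index the source. -/
def hop (k : ℕ) (a b : V) : Matrix (Set.powersetCard V k) (Set.powersetCard V k) ℝ :=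
  .of fun S T => if a ∈ S.val ∧ b ∉ S.val ∧ T = Equiv.swap a b • S then 1 else 0

lemma mem_swap_smul {a b x : V} {s : Finset V} :
    x ∈ Equiv.swap a b • s ↔ Equiv.swap a b x ∈ s :=
  (inv_smul_mem_iff (a := Equiv.swap a b)).symm

lemma hop_transpose (a b : V) : (hop k a b)ᵀ = hop k b a := by
  have hswap {a b : V} {S T : Set.powersetCard V k}
      (h : a ∈ T.val ∧ b ∉ T.val ∧ S = Equiv.swap a b • T) :
      b ∈ S.val ∧ a ∉ S.val ∧ T = Equiv.swap b a • S := by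
    obtain ⟨ha, hb, rfl⟩ := h
    simp [mem_swap_smul, Equiv.swap_comm b a, ha, hb]
  ext S T
  exact if_congr ⟨hswap, hswap⟩ rfl rfl

lemma sum_swap_smul_add {M : Type*} [AddCommMonoid M] (f : V → M) {a b : V} {s : Finset V}
    (ha : a ∈ s) (hb : b ∉ s) :
    ∑ x ∈ Equiv.swap a b • s, f x + f a = ∑ x ∈ s, f x + f b := by
  have hswap : Equiv.swap a b • s = insert b (s.erase a) := by
    ext x
    grind [mem_swap_smul]
  rw [hswap, sum_insert (by grind), ← sum_erase_add s f ha]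
  abel

variable [Fintype V]

lemma hop_mul_apply (a b : V) (M : Matrix (Set.powersetCard V k) (Set.powersetCard V k) ℝ)
    (S T : Set.powersetCard V k) :
    (hop k a b * M) S T = if a ∈ S.val ∧ b ∉ S.val then M (Equiv.swap a b • S) T else 0 := by
  simp [hop, mul_apply, ← and_assoc, ite_and]

lemma lie_hop_hop_self (a b : V) :
    ⁅hop k a b, hop k b a⁆ = diagonal fun S : Set.powersetCard V k =>
      (if a ∈ S.val then 1 else 0) - if b ∈ S.val then 1 else 0 := by
  ext S T
  simp only [Ring.lie_def, Matrix.sub_apply, hop_mul_apply, diagonal_apply]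
  simp only [hop, of_apply, Set.powersetCard.coe_smul, mem_swap_smul, Equiv.swap_comm b a,
    smul_smul, Equiv.swap_mul_self, one_smul, Equiv.swap_apply_left, Equiv.swap_apply_right]
  grind

lemma lie_hop_hop_of_ne {a b c d : V} (hac : a ≠ c) (hbd : b ≠ d) :
    ⁅hop k a b, hop k d c⁆ = 0 := by
  have hcomm (h : [a, b, d, c].Nodup) :
      Equiv.swap a b * Equiv.swap d c = Equiv.swap d c * Equiv.swap a b :=
    (Equiv.Perm.disjoint_swap_swap h).commute.eq
  ext S T
  simp only [Ring.lie_def, Matrix.sub_apply, hop_mul_apply, Matrix.zero_apply]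
  simp only [hop, of_apply, Set.powersetCard.coe_smul, mem_swap_smul, smul_smul]
  -- For distinct vertices the swaps commute; if `a = d` or `b = c`, both products vanish.
  grind

theorem lie_transpose_sum_hop (σ : Equiv.Perm V) {w : V → ℝ} (hw : ∀ x, 0 ≤ w x) :
    ⁅∑ x, √(w x) • hop k x (σ x), (∑ x, √(w x) • hop k x (σ x))ᵀ⁆ =
      diagonal fun S : Set.powersetCard V k =>
        ∑ x, w x * ((if x ∈ S.val then 1 else 0) - if σ x ∈ S.val then 1 else 0) := by
  have hterm (x y : V) : ⁅√(w x) • hop k x (σ x), √(w y) • hop k (σ y) y⁆ =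
      if x = y then diagonal fun S : Set.powersetCard V k =>
        w x * ((if x ∈ S.val then 1 else 0) - if σ x ∈ S.val then 1 else 0) else 0 := by
    rw [smul_lie, lie_smul]
    split_ifs with hxy
    · subst hxy
      rw [lie_hop_hop_self, smul_smul, Real.mul_self_sqrt (hw x), ← diagonal_smul]
      rfl
    · rw [lie_hop_hop_of_ne hxy (σ.injective.ne hxy), smul_zero, smul_zero]
  simp only [transpose_sum, transpose_smul, hop_transpose, sum_lie_sum, hterm, sum_ite_eq, mem_univ,
    if_true]
  ext S T
  simp only [Matrix.sum_apply, diagonal_apply]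
  split_ifs <;> simp

end Hop

section Chain

lemma coe_finRotate_eq_or {n : ℕ} (i : Fin n) :
    (finRotate n i : ℕ) = i + 1 ∨ (finRotate n i : ℕ) = 0 ∧ (i : ℕ) + 1 = n := by
  cases n with
  | zero => exact i.elim0
  | succ n =>
    obtain rfl | hi := eq_or_ne i (Fin.last n)
    · simp
    · exact .inl (coe_finRotate_of_ne_last hi)

/-- The squared matrix entry on the edge from `i` to `i + 1` of the chain `{0, …, n - 1}`, as for
the irreducible representation of `sl₂` of dimension `n`. It vanishes for `i = n - 1`, which removes
the wrap-around edge of the cyclic rotation `finRotate n`. -/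
noncomputable def chainWeight {n : ℕ} (i : Fin n) : ℝ := ((i : ℝ) + 1) * (n - (i + 1))

lemma chainWeight_nonneg {n : ℕ} (i : Fin n) : 0 ≤ chainWeight i :=
  mul_nonneg (by positivity) (sub_nonneg.2 (by exact_mod_cast i.2))

lemma coe_finRotate_of_chainWeight_ne_zero {n : ℕ} {i : Fin n} (hi : chainWeight i ≠ 0) :
    (finRotate n i : ℕ) = i + 1 := by
  refine (coe_finRotate_eq_or i).resolve_right fun hlast => hi ?_
  rw [chainWeight, sub_eq_zero.2 (by exact_mod_cast hlast.2.symm), mul_zero]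

lemma chainWeight_eq_finRotate {n : ℕ} (i : Fin n) :
    chainWeight i = (finRotate n i : ℕ) * ((n : ℝ) - (finRotate n i : ℕ)) := by
  obtain h | ⟨h, hi⟩ := coe_finRotate_eq_or i
  · rw [h, chainWeight, Nat.cast_succ]
  · have hn : (n : ℝ) = i + 1 := by exact_mod_cast hi.symm
    rw [h, chainWeight, hn, sub_self, mul_zero, Nat.cast_zero, zero_mul]

/-- The sum of the elements of a `k`-subset of `{0, …, n - 1}`, which grades these subsets; the
least value is `k.choose 2`. -/
def elementSum {n k : ℕ} (S : Set.powersetCard (Fin n) k) : ℕ := ∑ i ∈ S.val, (i : ℕ)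

lemma sum_chainWeight_mul_sub {n k : ℕ} (S : Set.powersetCard (Fin n) k) :
    ∑ i, chainWeight i * ((if i ∈ S.val then 1 else 0) - if finRotate n i ∈ S.val then 1 else 0) =
      ((n : ℝ) - 1) * k - 2 * elementSum S := by
  have hshift := Equiv.sum_comp (finRotate n) fun i =>
    ((i : ℕ) * ((n : ℝ) - (i : ℕ))) * if i ∈ S.val then 1 else 0
  simp only [← chainWeight_eq_finRotate] at hshift
  calc _ = ∑ i, if i ∈ S.val then ((n : ℝ) - 1) - 2 * (i : ℕ) else 0 := by
        simp only [mul_sub, sum_sub_distrib, hshift]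
        rw [← sum_sub_distrib]
        refine sum_congr rfl fun i _ => ?_
        split_ifs <;> (rw [chainWeight]; ring)
    _ = ((n : ℝ) - 1) * k - 2 * elementSum S := by
        rw [sum_ite_mem, univ_inter, sum_sub_distrib, sum_const, S.prop, nsmul_eq_mul, ← mul_sum,
          elementSum, Nat.cast_sum, mul_comm]

/-- The raising operator on the `k`-th exterior power of the `n`-dimensional irreducible
representation of `sl₂`, in the basis of `k`-subsets of `{0, …, n - 1}`. -/
noncomputable def chainRaising (n k : ℕ) :
    Matrix (Set.powersetCard (Fin n) k) (Set.powersetCard (Fin n) k) ℝ :=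
  ∑ i, √(chainWeight i) • hop k i (finRotate n i)

theorem isRaising_chainRaising (n k : ℕ) :
    IsRaising elementSum (((n : ℤ) - 1) * k) (chainRaising n k) where
  rank_eq {S T} h := by
    rw [chainRaising, Matrix.sum_apply] at h
    obtain ⟨i, -, hi⟩ := exists_ne_zero_of_sum_ne_zero h
    obtain ⟨hweight, hhop⟩ := mul_ne_zero_iff.1 hi
    obtain ⟨hmem, hnotMem, rfl⟩ := (ite_ne_right_iff.1 hhop).1
    have hsum := sum_swap_smul_add (fun j : Fin n => (j : ℕ)) hmem hnotMem
    have hsucc := coe_finRotate_of_chainWeight_ne_zero fun h0 =>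
      hweight (by rw [h0, Real.sqrt_zero])
    rw [elementSum, elementSum, Set.powersetCard.coe_smul]
    omega
  lie_transpose := by
    rw [chainRaising, lie_transpose_sum_hop _ chainWeight_nonneg]
    simp only [sum_chainWeight_mul_sub, Int.cast_mul, Int.cast_sub, Int.cast_natCast, Int.cast_one]

lemma rankPolynomial_elementSum (n k : ℕ) :
    rankPolynomial (elementSum (n := n) (k := k)) = X ^ k.choose 2 * gauss n k := by
  rw [← esymm_X_pow, esymm_map_val]
  simp only [prod_pow_eq_pow_sum]
  exact (sum_subtype _ (by simp) fun s : Finset (Fin n) => (X : ℤ[X]) ^ ∑ i ∈ s, (i : ℕ)).symm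

end Chain

lemma coprime_gcd_of_eq_mul_add {a r m c : ℕ} (h : a = c * m + 1 + r) : (a.gcd r).Coprime m := by
  rw [h, Nat.gcd_add_self_left]
  exact Nat.Coprime.coprime_dvd_left (Nat.gcd_dvd_left _ _) (by simp)

theorem stmt5_general {m N a l r : ℕ} (hN : m ∣ N) (hl : m ∣ l + 1) (h : (a.gcd r).Coprime m) :
    ∃ p : ℕ[X], gauss N a * gauss (l + r) l =
      (∑ i ∈ range m, X ^ i) * p.map (Nat.castRingHom ℤ) := by
  obtain ⟨c, hc⟩ := qNat_dvd_gauss_mul_gauss hN hl h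
  have hm : m ≠ 0 := ne_zero_of_dvd_ne_zero l.succ_ne_zero hl
  set s := a.choose 2 + l.choose 2 with hs
  have hrank : (∑ i ∈ range m, X ^ i) * (X ^ s * c) = rankPolynomial
      fun x : Set.powersetCard (Fin N) a × Set.powersetCard (Fin (l + r)) l =>
        elementSum x.1 + elementSum x.2 := by
    rw [rankPolynomial_prod elementSum elementSum, rankPolynomial_elementSum,
      rankPolynomial_elementSum, hs, ← qNat]
    linear_combination -X ^ s * hc
  have hraising := (isRaising_chainRaising N a).prod (isRaising_chainRaising (l + r) l)
  have hc_nonneg (w : ℕ) : 0 ≤ c.coeff w := by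
    rw [← coeff_X_pow_mul c s w]
    refine (hrank ▸ hraising.isUnimodal_rankPolynomial).coeff_nonneg_of_geom_sum_mul hm ?_ _
    rw [hrank, coeff_rankPolynomial]
    positivity
  obtain ⟨p, rfl⟩ := exists_map_natCast_eq_of_coeff_nonneg hc_nonneg
  exact ⟨p, hc⟩

/-- For `n ≥ 2` and `n-1 ≤ k ≤ 2n-3`, the quotient
`c(n,k;q) = (1/[n-1]_q)·[3n-3, n+k]_q·[k-1, n-2]_q` is a polynomial in `q` with
nonnegative integer coefficients: there is `p ∈ ℕ[q]` with
`[3n-3, n+k]_q·[k-1, n-2]_q = [n-1]_q · p`. -/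
theorem stmt5 (n k : ℕ) (hn : 2 ≤ n) (hnk : (n : ℤ) - 1 ≤ (k : ℤ))
    (hk : (k : ℤ) ≤ 2 * (n : ℤ) - 3) :
    ∃ p : Polynomial ℕ,
      gauss (3 * n - 3) (n + k) * gauss (k - 1) (n - 2) =
        (∑ i ∈ Finset.range (n - 1), Polynomial.X ^ i) *
          p.map (Nat.castRingHom ℤ) := by
  rw [show k - 1 = n - 2 + (k + 1 - n) by omega]
  exact stmt5_general ⟨3, by omega⟩ ⟨1, by omega⟩ (coprime_gcd_of_eq_mul_add (c := 2) (by omega))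
end

section
/- The number of non-crossing connected graphs on n labelled vertices arranged on a circle with k edges, for n-1 ≤ k ≤ 2n-3, equals (1/(n-1)) * binom(3n-3, n+k) * binom(k-1, n-2). -/
/-- Two chords of the circle (with vertices `0 < 1 < ⋯ < n-1` in convex position)
cross iff their endpoints interleave. -/
def Crosses {n : ℕ} (e f : Sym2 (Fin n)) : Prop :=
  ∃ a b c d : Fin n, e = s(a, b) ∧ f = s(c, d) ∧ a < c ∧ c < b ∧ b < d

/-- A set of edges is non-crossing (and has no loops). -/
def IsNC {n : ℕ} (E : Finset (Sym2 (Fin n))) : Prop :=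
  (∀ e ∈ E, ¬ e.IsDiag) ∧ ∀ e ∈ E, ∀ f ∈ E, ¬ Crosses e f

/-- The simple graph on `Fin n` determined by an edge set. -/
def graphOf {n : ℕ} (E : Finset (Sym2 (Fin n))) : SimpleGraph (Fin n) :=
  SimpleGraph.fromEdgeSet (↑E)

/-- Non-crossing connected graph. -/
def IsNCC {n : ℕ} (E : Finset (Sym2 (Fin n))) : Prop :=
  IsNC E ∧ (graphOf E).Connected

/-- Number of non-crossing connected graphs on `n` vertices with `k` edges. -/
noncomputable def ncc (n k : ℕ) : ℕ :=
  Nat.card {E : Finset (Sym2 (Fin n)) // IsNCC E ∧ E.card = k}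

/-- The edge set contains the edge `{1, n}` (in `Fin n` coordinates, `{0, n-1}`). -/
def HasEdge1n {n : ℕ} (E : Finset (Sym2 (Fin n))) : Prop :=
  ∃ a b : Fin n, (a : ℕ) = 0 ∧ (b : ℕ) = n - 1 ∧ s(a, b) ∈ E

/-- Number of non-crossing connected graphs on `n` vertices with `k` edges
containing the edge `{1, n}`. -/
noncomputable def nccEdge (n k : ℕ) : ℕ :=
  Nat.card {E : Finset (Sym2 (Fin n)) // IsNCC E ∧ E.card = k ∧ HasEdge1n E}

/-- Rotation of the circle of `n` vertices by `m` positions. -/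
def rotMap (n m : ℕ) : Fin n → Fin n := fun i => ⟨(i.1 + m) % n, Nat.mod_lt _ i.pos⟩

/-- The edge set is fixed under rotation by `m` positions. -/
def RotInv (n m : ℕ) (E : Finset (Sym2 (Fin n))) : Prop :=
  ∀ e ∈ E, Sym2.map (rotMap n m) e ∈ E

/-- Number of non-crossing connected graphs on `n` vertices with `k` edges fixed
under rotation by `m` positions. -/
noncomputable def nccRot (n k m : ℕ) : ℕ :=
  Nat.card {E : Finset (Sym2 (Fin n)) // IsNCC E ∧ E.card = k ∧ RotInv n m E}

/-!
Cut a connected non-crossing graph at the largest neighbour `j` of its first vertex: no edge passes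
over `j`, so the graph splits into a graph containing its base (the edge between its two extreme
vertices) and an arbitrary one. Deleting the base leaves either a connected graph without base or
two connected graphs on complementary intervals. Let `Y` be the series of the graphs with at least
two vertices, `X` marking the vertices but one and `w` the edges. Eliminating the based graphs from
the two decompositions gives `Y (1 - w Y) = X w (1 + Y)³`, and Lagrange inversion with
`φ = w (1 + X)³ / (1 - w X)` extracts the coefficients.
-/

open Finset
open scoped FinsetFamily

section Reachability

variable {V W : Type*} {G : SimpleGraph V} {H : SimpleGraph W} {u v : V}

theorem reachable_map_of_adj {f : V → W} (hf : ∀ x y, G.Adj x y → H.Reachable (f x) (f y))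
    (h : G.Reachable u v) : H.Reachable (f u) (f v) := by
  obtain ⟨walk⟩ := h
  induction walk with
  | nil => rfl
  | cons hadj _ ih => exact (hf _ _ hadj).trans ih

theorem mem_of_reachable {S : Set V} (hS : ∀ x y, G.Adj x y → x ∈ S → y ∈ S)
    (h : G.Reachable u v) (hu : u ∈ S) : v ∈ S := by
  obtain ⟨walk⟩ := h
  induction walk with
  | nil => exact hu
  | cons hadj _ ih => exact ih (hS _ _ hadj hu)

end Reachability

section ConnectedOn

variable {α β : Type*} {E F : Finset (α × α)} {V W : Set α} {p q : α}

/-- The simple graph on `α` whose edges are the pairs listed in `E`, forgetting their order. -/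
def chordGraph (E : Finset (α × α)) : SimpleGraph α :=
  SimpleGraph.fromRel fun p q => (p, q) ∈ E

/-- Any two vertices of `V` are joined by a path of `chordGraph E`. The path may leave `V`; for the
chord sets below it cannot, since all their endpoints lie in `V`. -/
def ConnectedOn (V : Set α) (E : Finset (α × α)) : Prop :=
  ∀ x ∈ V, ∀ y ∈ V, (chordGraph E).Reachable x y

theorem chordGraph_adj :
    (chordGraph E).Adj p q ↔ p ≠ q ∧ ((p, q) ∈ E ∨ (q, p) ∈ E) :=
  SimpleGraph.fromRel_adj ..

theorem reachable_of_mem (h : (p, q) ∈ E) : (chordGraph E).Reachable p q := by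
  by_cases hpq : p = q
  · rw [hpq]
  · exact (chordGraph_adj.2 ⟨hpq, Or.inl h⟩).reachable

theorem reachable_map {F : Finset (β × β)} {f : α → β}
    (hf : ∀ p q, (p, q) ∈ E → (chordGraph F).Reachable (f p) (f q))
    (h : (chordGraph E).Reachable p q) : (chordGraph F).Reachable (f p) (f q) := by
  refine reachable_map_of_adj (fun x y hxy => ?_) h
  rcases (chordGraph_adj.1 hxy).2 with hE | hE
  · exact hf _ _ hE
  · exact (hf _ _ hE).symm

theorem ConnectedOn.map {F : Finset (β × β)} {W : Set β} {f : α → β} (h : ConnectedOn V E)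
    (hf : ∀ p q, (p, q) ∈ E → (chordGraph F).Reachable (f p) (f q)) (hW : W ⊆ f '' V) :
    ConnectedOn W F := by
  intro x hx y hy
  obtain ⟨u, hu, rfl⟩ := hW hx
  obtain ⟨v, hv, rfl⟩ := hW hy
  exact reachable_map hf (h u hu v hv)

theorem ConnectedOn.mono (h : ConnectedOn V E) (hEF : E ⊆ F) : ConnectedOn V F :=
  h.map (f := id) (fun _ _ hE => reachable_of_mem (hEF hE)) (Set.image_id V).ge

protected theorem ConnectedOn.union [DecidableEq α] (hE : ConnectedOn V E) (hF : ConnectedOn W F)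
    (hVW : (V ∩ W).Nonempty) : ConnectedOn (V ∪ W) (E ∪ F) := by
  obtain ⟨z, hzV, hzW⟩ := hVW
  have hz : ∀ x ∈ V ∪ W, (chordGraph (E ∪ F)).Reachable x z := by
    rintro x (hx | hx)
    · exact hE.mono subset_union_left x hx z hzV
    · exact hF.mono subset_union_right x hx z hzW
  exact fun x hx y hy => (hz x hx).trans (hz y hy).symm

theorem connectedOn_pair (p q : α) : ConnectedOn {p, q} {(p, q)} := by
  have h : (chordGraph {(p, q)}).Reachable p q := reachable_of_mem (mem_singleton_self _)
  rintro x (rfl | rfl) y (rfl | rfl)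
  exacts [.rfl, h, h.symm, .rfl]

theorem ConnectedOn.subset_of_forall_mem_iff {S : Set α} (h : ConnectedOn V E)
    (hS : ∀ p q, (p, q) ∈ E → (p ∈ S ↔ q ∈ S)) (hVS : (V ∩ S).Nonempty) : V ⊆ S := by
  obtain ⟨x, hxV, hxS⟩ := hVS
  refine fun y hy => mem_of_reachable (fun u v huv hu => ?_) (h x hxV y hy) hxS
  rcases (chordGraph_adj.1 huv).2 with hE | hE
  · exact (hS _ _ hE).1 hu
  · exact (hS _ _ hE).2 hu

theorem connectedOn_image_map (f : α ↪ β) :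
    ConnectedOn (f '' V) (E.map (f.prodMap f)) ↔ ConnectedOn V E := by
  have hmem : ∀ {p q}, (f p, f q) ∈ E.map (f.prodMap f) ↔ (p, q) ∈ E :=
    fun {p q} => mem_map' (f.prodMap f) (a := (p, q))
  refine ⟨fun h x hx y hy => ?_, fun h => h.map (fun p q hE => reachable_of_mem (hmem.2 hE)) le_rfl⟩
  have : Nonempty α := ⟨x⟩
  obtain ⟨g, hg⟩ := f.injective.hasLeftInverse
  have hgf : V ⊆ g '' (f '' V) := fun z hz => ⟨f z, Set.mem_image_of_mem f hz, hg z⟩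
  refine h.map (fun p q hE => ?_) hgf x hx y hy
  obtain ⟨⟨p, q⟩, hpq, heq⟩ := mem_map.1 hE
  obtain ⟨rfl, rfl⟩ := Prod.mk.inj heq
  simpa only [hg _] using reachable_of_mem hpq

end ConnectedOn

section Noncrossing

variable {α : Type*} [LinearOrder α] {E F : Finset (α × α)} {a b c d r s x y : α}

/-- `E` is a set of pairwise non-crossing chords `(p, q)`, `p < q`, with endpoints in the interval
`[a, b]` of a linear order, whose points are thought of as lying on the circle in this order. -/
structure IsNoncrossingOn (a b : α) (E : Finset (α × α)) : Prop where
  bounds {p q : α} : (p, q) ∈ E → a ≤ p ∧ p < q ∧ q ≤ b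
  not_cross {p q r s : α} : (p, q) ∈ E → (r, s) ∈ E → ¬ (p < r ∧ r < q ∧ q < s)

theorem IsNoncrossingOn.subset (hE : IsNoncrossingOn a b E) (hFE : F ⊆ E)
    (hF : ∀ p q, (p, q) ∈ F → c ≤ p ∧ q ≤ d) : IsNoncrossingOn c d F where
  bounds h := ⟨(hF _ _ h).1, (hE.bounds (hFE h)).2.1, (hF _ _ h).2⟩
  not_cross h₁ h₂ := hE.not_cross (hFE h₁) (hFE h₂)

protected theorem IsNoncrossingOn.union (hE : IsNoncrossingOn a b E) (hF : IsNoncrossingOn c d F)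
    (hac : a ≤ c) (hbc : b ≤ c) (hbd : b ≤ d) : IsNoncrossingOn a d (E ∪ F) where
  bounds {p q} h := by
    rcases mem_union.1 h with h | h
    · exact ⟨(hE.bounds h).1, (hE.bounds h).2.1, (hE.bounds h).2.2.trans hbd⟩
    · exact ⟨hac.trans (hF.bounds h).1, (hF.bounds h).2⟩
  not_cross {p q r s} h₁ h₂ := by
    rcases mem_union.1 h₁ with h₁ | h₁ <;> rcases mem_union.1 h₂ with h₂ | h₂
    · exact hE.not_cross h₁ h₂
    · have := hE.bounds h₁
      have := hF.bounds h₂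
      grind
    · have := hF.bounds h₁
      have := hE.bounds h₂
      grind
    · exact hF.not_cross h₁ h₂

protected theorem IsNoncrossingOn.insert (hE : IsNoncrossingOn a b E) (hab : a < b) :
    IsNoncrossingOn a b (insert (a, b) E) where
  bounds {p q} h := by
    have := hE.bounds (p := p) (q := q)
    grind
  not_cross {p q r s} h₁ h₂ := by
    have := hE.bounds (p := p) (q := q)
    have := hE.bounds (p := r) (q := s)
    have := hE.not_cross (p := p) (q := q) (r := r) (s := s)
    grind

theorem IsNoncrossingOn.lower (hE : IsNoncrossingOn a b E) (j : α) :
    IsNoncrossingOn a j {e ∈ E | e.2 ≤ j} :=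
  hE.subset (filter_subset _ _) fun _ _ h =>
    ⟨(hE.bounds (mem_filter.1 h).1).1, (mem_filter.1 h).2⟩

theorem IsNoncrossingOn.upper (hE : IsNoncrossingOn a b E) (j : α) :
    IsNoncrossingOn j b {e ∈ E | j ≤ e.1} :=
  hE.subset (filter_subset _ _) fun _ _ h =>
    ⟨(mem_filter.1 h).2, (hE.bounds (mem_filter.1 h).1).2.2⟩

theorem IsNoncrossingOn.reachable_of_enclosed (hE : IsNoncrossingOn a b E) (hrs : (r, s) ∈ E)
    (h : (chordGraph E).Reachable x y) (hx : r < x ∧ x < s) (hy : ¬ (r < y ∧ y < s)) :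
    (chordGraph E).Reachable x r := by
  obtain ⟨walk⟩ := h
  induction walk with
  | nil => exact absurd hx hy
  | @cons x z y hadj _ ih =>
    refine hadj.reachable.trans ?_
    by_cases hz : r < z ∧ z < s
    · exact ih hz hy
    have hz : z = r ∨ z = s := by
      rcases (chordGraph_adj.1 hadj).2 with hxz | hzx
      · have := hE.bounds hxz
        have := hE.not_cross hrs hxz
        grind
      · have := hE.bounds hzx
        have := hE.not_cross hzx hrs
        grind
    rcases hz with rfl | rfl
    · rfl
    · exact (reachable_of_mem hrs).symm

end Noncrossing

section ConnectedNC

variable {α : Type*} [LinearOrder α] {E L U : Finset (α × α)} {a b j : α}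

theorem ConnectedOn.lower (hE : ConnectedOn (Set.Icc a b) E)
    (hj : ∀ p q, (p, q) ∈ E → q ≤ j ∨ j ≤ p) (hlt : ∀ p q, (p, q) ∈ E → p < q) (hjb : j ≤ b) :
    ConnectedOn (Set.Icc a j) {e ∈ E | e.2 ≤ j} := by
  refine hE.map (f := (min · j)) (fun p q h => ?_)
    fun x hx => ⟨x, ⟨hx.1, hx.2.trans hjb⟩, min_eq_left hx.2⟩
  have hpq := (hlt p q h).le
  rcases hj p q h with hq | hp
  · rw [min_eq_left hq, min_eq_left (hpq.trans hq)]
    exact reachable_of_mem (mem_filter.2 ⟨h, hq⟩)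
  · rw [min_eq_right hp, min_eq_right (hp.trans hpq)]

theorem ConnectedOn.upper (hE : ConnectedOn (Set.Icc a b) E)
    (hj : ∀ p q, (p, q) ∈ E → q ≤ j ∨ j ≤ p) (hlt : ∀ p q, (p, q) ∈ E → p < q) (haj : a ≤ j) :
    ConnectedOn (Set.Icc j b) {e ∈ E | j ≤ e.1} := by
  refine hE.map (f := (max · j)) (fun p q h => ?_)
    fun x hx => ⟨x, ⟨haj.trans hx.1, hx.2⟩, max_eq_left hx.1⟩
  have hpq := (hlt p q h).le
  rcases hj p q h with hq | hp
  · rw [max_eq_right hq, max_eq_right (hpq.trans hq)]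
  · rw [max_eq_left hp, max_eq_left (hp.trans hpq)]
    exact reachable_of_mem (mem_filter.2 ⟨h, hp⟩)

theorem ConnectedOn.exists_mem_left (hE : ConnectedOn (Set.Icc a b) E)
    (hnc : IsNoncrossingOn a b E) (hab : a < b) : ∃ j, (a, j) ∈ E := by
  have hreach := hE a ⟨le_rfl, hab.le⟩ b ⟨hab.le, le_rfl⟩
  obtain ⟨j, hj⟩ := hreach.nonempty_neighborSet_left hab.ne
  rcases (chordGraph_adj.1 hj).2 with h | h
  · exact ⟨j, h⟩
  · have := hnc.bounds h
    exact absurd this.1 this.2.1.not_ge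

theorem le_or_le_of_isGreatest (hE : IsNoncrossingOn a b E)
    (hj : IsGreatest {i | (a, i) ∈ E} j) {p q : α} (h : (p, q) ∈ E) : q ≤ j ∨ j ≤ p := by
  have := hE.bounds h
  have := hE.not_cross hj.1 h
  have hq : p = a → q ≤ j := fun hp => hj.2 (hp ▸ h)
  grind

variable [LocallyFiniteOrder α]

open Classical in
/-- The connected non-crossing graphs with vertex set the interval `[a, b]`, as sets of chords. -/
noncomputable def connectedNC (a b : α) : Finset (Finset (α × α)) :=
  {E ∈ (Icc a b ×ˢ Icc a b).powerset | IsNoncrossingOn a b E ∧ ConnectedOn (Set.Icc a b) E}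

/-- The connected non-crossing graphs on `[a, b]` that contain the chord `(a, b)` joining the two
extreme vertices. -/
noncomputable def basedNC (a b : α) : Finset (Finset (α × α)) :=
  {E ∈ connectedNC a b | (a, b) ∈ E}

theorem mem_connectedNC :
    E ∈ connectedNC a b ↔ IsNoncrossingOn a b E ∧ ConnectedOn (Set.Icc a b) E := by
  simp only [connectedNC, mem_filter, mem_powerset, and_iff_right_iff_imp]
  rintro ⟨hE, -⟩ ⟨p, q⟩ h
  obtain ⟨hap, hpq, hqb⟩ := hE.bounds h
  simp only [mem_product, mem_Icc]
  exact ⟨⟨hap, hpq.le.trans hqb⟩, hap.trans hpq.le, hqb⟩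

theorem mem_basedNC : E ∈ basedNC a b ↔ E ∈ connectedNC a b ∧ (a, b) ∈ E :=
  mem_filter

theorem basedNC_subset (a b : α) : basedNC a b ⊆ connectedNC a b :=
  filter_subset _ _

theorem union_mem_connectedNC (haj : a ≤ j) (hjb : j ≤ b) (hL : L ∈ connectedNC a j)
    (hU : U ∈ connectedNC j b) : L ∪ U ∈ connectedNC a b := by
  rw [mem_connectedNC] at hL hU ⊢
  refine ⟨hL.1.union hU.1 haj le_rfl hjb, ?_⟩
  rw [← Set.Icc_union_Icc_eq_Icc haj hjb]
  exact hL.2.union hU.2 ⟨j, ⟨haj, le_rfl⟩, le_rfl, hjb⟩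

/-- The largest neighbour `j` of `a` is a cut vertex: no chord passes strictly over it. -/
theorem connectedNC_eq_biUnion (hab : a < b) :
    connectedNC a b = (Ioc a b).biUnion fun j => basedNC a j ⊻ connectedNC j b := by
  ext E
  simp only [mem_biUnion, mem_sups, mem_Ioc, mem_basedNC]
  constructor
  · intro hE
    obtain ⟨hnc, hconn⟩ := mem_connectedNC.1 hE
    obtain ⟨j, hj⟩ : ∃ j, IsGreatest {i | (a, i) ∈ E} j := by
      have hfin : {i | (a, i) ∈ E}.Finite :=
        (Set.finite_Icc a b).subset fun i hi => ⟨(hnc.bounds hi).2.1.le, (hnc.bounds hi).2.2⟩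
      exact Set.exists_max_image _ id hfin (hconn.exists_mem_left hnc hab)
    have hcut : ∀ p q, (p, q) ∈ E → q ≤ j ∨ j ≤ p := fun p q => le_or_le_of_isGreatest hnc hj
    have hlt : ∀ p q, (p, q) ∈ E → p < q := fun p q h => (hnc.bounds h).2.1
    obtain ⟨-, haj, hjb⟩ := hnc.bounds hj.1
    refine ⟨j, ⟨haj, hjb⟩, {e ∈ E | e.2 ≤ j},
      ⟨mem_connectedNC.2 ⟨hnc.lower j, hconn.lower hcut hlt hjb⟩, mem_filter.2 ⟨hj.1, le_rfl⟩⟩,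
      {e ∈ E | j ≤ e.1}, mem_connectedNC.2 ⟨hnc.upper j, hconn.upper hcut hlt haj.le⟩, ?_⟩
    rw [sup_eq_union, ← filter_or]
    exact filter_true_of_mem fun e he => hcut e.1 e.2 he
  · rintro ⟨j, ⟨haj, hjb⟩, L, ⟨hL, -⟩, U, hU, rfl⟩
    exact union_mem_connectedNC haj.le hjb hL hU

theorem isGreatest_of_mem_sups (haj : a < j) (h : E ∈ basedNC a j ⊻ connectedNC j b) :
    IsGreatest {i | (a, i) ∈ E} j := by
  obtain ⟨L, hL, U, hU, rfl⟩ := mem_sups.1 h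
  obtain ⟨hL, haj'⟩ := mem_basedNC.1 hL
  refine ⟨mem_union_left _ haj', fun i hi => ?_⟩
  rcases mem_union.1 hi with hi | hi
  · exact ((mem_connectedNC.1 hL).1.bounds hi).2.2
  · exact absurd ((mem_connectedNC.1 hU).1.bounds hi).1 haj.not_ge

theorem pairwiseDisjoint_basedNC_sups (a b : α) :
    (Ioc a b : Set α).PairwiseDisjoint fun j => basedNC a j ⊻ connectedNC j b := by
  intro j hj k hk hjk
  refine Finset.disjoint_left.2 fun E hEj hEk => hjk ?_
  exact (isGreatest_of_mem_sups (mem_Ioc.1 hj).1 hEj).unique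
    (isGreatest_of_mem_sups (mem_Ioc.1 hk).1 hEk)

end ConnectedNC

section Gap

variable {α : Type*} [LinearOrder α] {E F : Finset (α × α)} {a b i : α}

/-- No chord of `E` passes over the place just after the vertex `i`, so that the vertices up to `i`
and those beyond `i` are not linked. -/
def IsGap (E : Finset (α × α)) (i : α) : Prop :=
  ∀ p q, (p, q) ∈ E → q ≤ i ∨ i < p

theorem IsGap.subset (hE : IsGap E i) (hFE : F ⊆ E) : IsGap F i :=
  fun p q h => hE p q (hFE h)

theorem ConnectedOn.not_isGap (hconn : ConnectedOn (Set.Icc a b) E) (hnc : IsNoncrossingOn a b E)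
    (hai : a ≤ i) (hib : i < b) : ¬ IsGap E i := by
  intro hi
  have hsub : Set.Icc a b ⊆ Set.Iic i := by
    refine hconn.subset_of_forall_mem_iff (fun p q h => ?_)
      ⟨a, ⟨le_rfl, hai.trans hib.le⟩, hai⟩
    have := hi p q h
    have := hnc.bounds h
    grind
  exact hib.not_ge (hsub ⟨hai.trans hib.le, le_rfl⟩)

/-- The gap follows the last vertex of the component of `a`: a chord passing over it would enclose
that vertex, and could be reached from it. -/
theorem IsNoncrossingOn.exists_isGap [LocallyFiniteOrder α] (hnc : IsNoncrossingOn a b E)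
    (hab : a < b) (hconn : ConnectedOn (Set.Icc a b) (insert (a, b) E))
    (hE : ¬ ConnectedOn (Set.Icc a b) E) : ∃ i, a ≤ i ∧ i < b ∧ IsGap E i := by
  have hb : ¬ (chordGraph E).Reachable a b := by
    refine fun h => hE (hconn.map (f := id) (fun p q hpq => ?_) (Set.image_id _).ge)
    rcases mem_insert.1 hpq with heq | hpq
    · obtain ⟨rfl, rfl⟩ := Prod.mk.inj heq
      exact h
    · exact reachable_of_mem hpq
  obtain ⟨i, ⟨⟨hai, hib⟩, hi⟩, hmax⟩ :=
    Set.exists_max_image {x ∈ Set.Icc a b | (chordGraph E).Reachable a x} id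
      ((Set.finite_Icc a b).subset (Set.sep_subset _ _)) ⟨a, ⟨le_rfl, hab.le⟩, .rfl⟩
  refine ⟨i, hai, hib.lt_of_ne fun h => hb (h ▸ hi), fun p q hpq => ?_⟩
  by_contra! hcon
  obtain ⟨hiq, hpi⟩ := hcon
  obtain ⟨hap, -, hqb⟩ := hnc.bounds hpq
  have hip : (chordGraph E).Reachable i p := by
    rcases hpi.eq_or_lt with rfl | hpi
    · rfl
    · exact hnc.reachable_of_enclosed hpq hi.symm ⟨hpi, hiq⟩ fun h => hap.not_gt h.1
  have hq : (chordGraph E).Reachable a q := (hi.trans hip).trans (reachable_of_mem hpq)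
  exact hiq.not_ge (hmax q ⟨⟨hai.trans hiq.le, hqb⟩, hq⟩)

end Gap

section GapDecomposition

variable {E L U : Finset (ℕ × ℕ)} {a b i j : ℕ}

theorem IsGap.connectedOn_lower (hi : IsGap E i) (hnc : IsNoncrossingOn a b E)
    (hconn : ConnectedOn (Set.Icc a b) (insert (a, b) E)) (hai : a ≤ i) (hib : i < b) :
    ConnectedOn (Set.Icc a i) {e ∈ E | e.2 ≤ i} := by
  refine hconn.map (f := fun x => if x ≤ i then x else a) (fun p q h => ?_)
    fun x hx => ⟨x, ⟨hx.1, hx.2.trans hib.le⟩, if_pos hx.2⟩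
  rcases mem_insert.1 h with heq | h
  · obtain ⟨rfl, rfl⟩ := Prod.mk.inj heq
    simp only [if_pos hai, if_neg hib.not_ge, SimpleGraph.Reachable.rfl]
  have hpq := (hnc.bounds h).2.1
  rcases hi p q h with hq | hp
  · simp only [if_pos hq, if_pos (hpq.le.trans hq)]
    exact reachable_of_mem (mem_filter.2 ⟨h, hq⟩)
  · simp only [if_neg hp.not_ge, if_neg (hp.trans hpq).not_ge, SimpleGraph.Reachable.rfl]

theorem IsGap.connectedOn_upper (hi : IsGap E i) (hnc : IsNoncrossingOn a b E)
    (hconn : ConnectedOn (Set.Icc a b) (insert (a, b) E)) (hai : a ≤ i) (hib : i < b) :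
    ConnectedOn (Set.Icc (i + 1) b) {e ∈ E | i + 1 ≤ e.1} := by
  refine hconn.map (f := fun x => if i < x then x else b) (fun p q h => ?_)
    fun x hx => ⟨x, ⟨hai.trans (Nat.le_of_succ_le hx.1), hx.2⟩, if_pos hx.1⟩
  rcases mem_insert.1 h with heq | h
  · obtain ⟨rfl, rfl⟩ := Prod.mk.inj heq
    simp only [if_pos hib, if_neg hai.not_gt, SimpleGraph.Reachable.rfl]
  have hpq := (hnc.bounds h).2.1
  rcases hi p q h with hq | hp
  · simp only [if_neg hq.not_gt, if_neg (hpq.le.trans hq).not_gt, SimpleGraph.Reachable.rfl]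
  · simp only [if_pos hp, if_pos (hp.trans hpq)]
    exact reachable_of_mem (mem_filter.2 ⟨h, hp⟩)

theorem IsGap.mem_connectedNC_sups (hi : IsGap E i) (hnc : IsNoncrossingOn a b E)
    (hconn : ConnectedOn (Set.Icc a b) (insert (a, b) E)) (hai : a ≤ i) (hib : i < b) :
    E ∈ connectedNC a i ⊻ connectedNC (i + 1) b := by
  refine mem_sups.2 ⟨{e ∈ E | e.2 ≤ i},
    mem_connectedNC.2 ⟨hnc.lower i, hi.connectedOn_lower hnc hconn hai hib⟩,
    {e ∈ E | i + 1 ≤ e.1},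
    mem_connectedNC.2 ⟨hnc.upper (i + 1), hi.connectedOn_upper hnc hconn hai hib⟩, ?_⟩
  rw [sup_eq_union, ← filter_or]
  exact filter_true_of_mem fun e he => hi e.1 e.2 he

theorem insert_union_mem_basedNC (hai : a ≤ i) (hib : i < b) (hL : L ∈ connectedNC a i)
    (hU : U ∈ connectedNC (i + 1) b) : insert (a, b) (L ∪ U) ∈ basedNC a b := by
  rw [mem_connectedNC] at hL hU
  refine mem_basedNC.2 ⟨mem_connectedNC.2 ⟨(hL.1.union hU.1 ?_ ?_ ?_).insert ?_, ?_⟩,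
    mem_insert_self _ _⟩
  iterate 4 omega
  have hLb : ConnectedOn (Set.Icc a i ∪ {a, b}) (L ∪ {(a, b)}) :=
    hL.2.union (connectedOn_pair a b) ⟨a, ⟨le_rfl, hai⟩, Or.inl rfl⟩
  have hLU := hLb.union hU.2 ⟨b, Or.inr (Or.inr rfl), hib, le_rfl⟩
  convert hLU using 1
  · ext x
    simp only [Set.mem_Icc, Set.mem_union, Set.mem_insert_iff, Set.mem_singleton_iff]
    omega
  · grind

theorem isGap_of_mem_sups (h : E ∈ connectedNC a i ⊻ connectedNC (i + 1) b) : IsGap E i := by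
  obtain ⟨L, hL, U, hU, rfl⟩ := mem_sups.1 h
  intro p q hpq
  rcases mem_union.1 hpq with hpq | hpq
  · exact Or.inl ((mem_connectedNC.1 hL).1.bounds hpq).2.2
  · exact Or.inr ((mem_connectedNC.1 hU).1.bounds hpq).1

theorem IsGap.eq_of_mem_sups (hj : IsGap E j) (haj : a ≤ j) (hjb : j < b)
    (h : E ∈ connectedNC a i ⊻ connectedNC (i + 1) b) : j = i := by
  obtain ⟨L, hL, U, hU, rfl⟩ := mem_sups.1 h
  rw [mem_connectedNC] at hL hU
  rcases lt_trichotomy j i with hlt | rfl | hlt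
  · exact absurd (hj.subset subset_union_left) (hL.2.not_isGap hL.1 haj hlt)
  · rfl
  · exact absurd (hj.subset subset_union_right) (hU.2.not_isGap hU.1 hlt hjb)

theorem pairwiseDisjoint_gap_sups (a b : ℕ) :
    (Ico a b : Set ℕ).PairwiseDisjoint fun i => connectedNC a i ⊻ connectedNC (i + 1) b := by
  intro i hi j _ hij
  refine Finset.disjoint_left.2 fun E hEi hEj => hij ?_
  exact (isGap_of_mem_sups hEi).eq_of_mem_sups (mem_Ico.1 hi).1 (mem_Ico.1 hi).2 hEj

theorem disjoint_connectedNC_biUnion_gap_sups (a b : ℕ) :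
    Disjoint (connectedNC a b)
      ((Ico a b).biUnion fun i => connectedNC a i ⊻ connectedNC (i + 1) b) := by
  refine Finset.disjoint_left.2 fun E hE hEgap => ?_
  obtain ⟨i, hi, hEi⟩ := mem_biUnion.1 hEgap
  rw [mem_connectedNC] at hE
  exact hE.2.not_isGap hE.1 (mem_Ico.1 hi).1 (mem_Ico.1 hi).2 (isGap_of_mem_sups hEi)

/-- Deleting the base chord `(a, b)` leaves either a connected graph or, by planarity, two connected
graphs on complementary intervals. -/
theorem basedNC_eq_sups (hab : a < b) :
    basedNC a b = {{(a, b)}} ⊻ (connectedNC a b \ basedNC a b ∪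
      (Ico a b).biUnion fun i => connectedNC a i ⊻ connectedNC (i + 1) b) := by
  ext E
  simp only [mem_sups, mem_singleton, exists_eq_left, mem_union, mem_sdiff, mem_biUnion, mem_Ico,
    sup_eq_union, singleton_union]
  constructor
  · intro hE
    obtain ⟨hE, hmem⟩ := mem_basedNC.1 hE
    obtain ⟨hnc, hconn⟩ := mem_connectedNC.1 hE
    rw [← insert_erase hmem] at hconn
    have hnc' : IsNoncrossingOn a b (E.erase (a, b)) :=
      hnc.subset (erase_subset _ _) fun p q h =>
        ⟨(hnc.bounds (mem_of_mem_erase h)).1, (hnc.bounds (mem_of_mem_erase h)).2.2⟩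
    refine ⟨E.erase (a, b), ?_, insert_erase hmem⟩
    by_cases hconn' : ConnectedOn (Set.Icc a b) (E.erase (a, b))
    · exact Or.inl ⟨mem_connectedNC.2 ⟨hnc', hconn'⟩,
        fun h => notMem_erase _ _ (mem_basedNC.1 h).2⟩
    · obtain ⟨i, hai, hib, hi⟩ := hnc'.exists_isGap hab hconn hconn'
      exact Or.inr ⟨i, ⟨hai, hib⟩, mem_sups.1 (hi.mem_connectedNC_sups hnc' hconn hai hib)⟩
  · rintro ⟨F, ⟨hF, -⟩ | ⟨i, ⟨hai, hib⟩, L, hL, U, hU, rfl⟩, rfl⟩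
    · obtain ⟨hnc, hconn⟩ := mem_connectedNC.1 hF
      exact mem_basedNC.2 ⟨mem_connectedNC.2 ⟨hnc.insert hab, hconn.mono (subset_insert _ _)⟩,
        mem_insert_self _ _⟩
    · exact insert_union_mem_basedNC hai hib hL hU

end GapDecomposition

section SizeEnumerator

open Polynomial

variable {ι : Type*} {𝒜 ℬ : Finset (Finset ι)}

/-- The generating polynomial of a set family by size: `∑ X ^ #E` over the members `E`. -/
noncomputable def sizeEnumerator (𝒜 : Finset (Finset ι)) : ℤ[X] :=
  ∑ E ∈ 𝒜, X ^ #E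

theorem coeff_sizeEnumerator (𝒜 : Finset (Finset ι)) (k : ℕ) :
    (sizeEnumerator 𝒜).coeff k = #{E ∈ 𝒜 | #E = k} := by
  simp only [sizeEnumerator, finsetSum_coeff, coeff_X_pow, sum_boole, eq_comm (a := k)]

theorem sizeEnumerator_map_mapEmbedding {κ : Type*} (f : ι ↪ κ) (𝒜 : Finset (Finset ι)) :
    sizeEnumerator (𝒜.map (mapEmbedding f).toEmbedding) = sizeEnumerator 𝒜 := by
  simp only [sizeEnumerator, sum_map, RelEmbedding.coe_toEmbedding, mapEmbedding_apply, card_map]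

variable [DecidableEq ι]

theorem sizeEnumerator_union (h : Disjoint 𝒜 ℬ) :
    sizeEnumerator (𝒜 ∪ ℬ) = sizeEnumerator 𝒜 + sizeEnumerator ℬ :=
  sum_union h

theorem sizeEnumerator_sdiff (h : ℬ ⊆ 𝒜) :
    sizeEnumerator (𝒜 \ ℬ) = sizeEnumerator 𝒜 - sizeEnumerator ℬ :=
  sum_sdiff_eq_sub h

theorem sizeEnumerator_biUnion {κ : Type*} {s : Finset κ} {𝒞 : κ → Finset (Finset ι)}
    (h : (s : Set κ).PairwiseDisjoint 𝒞) :
    sizeEnumerator (s.biUnion 𝒞) = ∑ i ∈ s, sizeEnumerator (𝒞 i) :=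
  sum_biUnion h

theorem sizeEnumerator_sups {U : Set ι} (hA : ∀ A ∈ 𝒜, ↑A ⊆ U) (hB : ∀ B ∈ ℬ, Disjoint U ↑B) :
    sizeEnumerator (𝒜 ⊻ ℬ) = sizeEnumerator 𝒜 * sizeEnumerator ℬ := by
  have hdisj : ∀ A ∈ 𝒜, ∀ B ∈ ℬ, Disjoint A B := fun A hA' B hB' =>
    disjoint_coe.1 ((hB B hB').mono_left (hA A hA'))
  have hinj : Set.InjOn (fun P : Finset ι × Finset ι => P.1 ⊔ P.2) (𝒜 ×ˢ ℬ : Finset _) := by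
    have hsep : ∀ P ∈ 𝒜 ×ˢ ℬ, ∀ x, (x ∈ P.1 ↔ x ∈ P.1 ⊔ P.2 ∧ x ∈ U) ∧
        (x ∈ P.2 ↔ x ∈ P.1 ⊔ P.2 ∧ x ∉ U) := by
      intro P hP x
      have hAU : x ∈ P.1 → x ∈ U := fun h => hA P.1 (mem_product.1 hP).1 (mem_coe.2 h)
      have hBU : x ∈ P.2 → x ∉ U := fun h =>
        Set.disjoint_right.1 (hB P.2 (mem_product.1 hP).2) (mem_coe.2 h)
      rw [sup_eq_union, mem_union]
      tauto
    intro P hP Q hQ h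
    simp only at h
    ext x
    · rw [(hsep P hP x).1, (hsep Q hQ x).1, h]
    · rw [(hsep P hP x).2, (hsep Q hQ x).2, h]
  calc sizeEnumerator (𝒜 ⊻ ℬ) = ∑ P ∈ 𝒜 ×ˢ ℬ, X ^ #(P.1 ⊔ P.2) := sum_image hinj
    _ = ∑ P ∈ 𝒜 ×ˢ ℬ, X ^ #P.1 * X ^ #P.2 := by
      refine sum_congr rfl fun P hP => ?_
      obtain ⟨hP₁, hP₂⟩ := mem_product.1 hP
      rw [sup_eq_union, card_union_of_disjoint (hdisj _ hP₁ _ hP₂), pow_add]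
    _ = sizeEnumerator 𝒜 * sizeEnumerator ℬ := by
      rw [sizeEnumerator, sizeEnumerator, sum_mul_sum, sum_product]

theorem sizeEnumerator_singleton_sups {e : ι} (he : ∀ B ∈ ℬ, e ∉ B) :
    sizeEnumerator ({{e}} ⊻ ℬ) = X * sizeEnumerator ℬ := by
  rw [sizeEnumerator_sups (U := {e}), sizeEnumerator, sum_singleton, card_singleton, pow_one]
  · simp only [mem_singleton, forall_eq, coe_singleton, subset_rfl]
  · exact fun B hB => Set.disjoint_singleton_left.2 (he B hB)

end SizeEnumerator

section Transport

variable {α β : Type*} [LinearOrder α] [LinearOrder β] {E : Finset (α × α)} {a b : α} {f : α ↪o β}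

theorem isNoncrossingOn_map :
    IsNoncrossingOn (f a) (f b) (E.map (f.toEmbedding.prodMap f.toEmbedding)) ↔
      IsNoncrossingOn a b E := by
  have hmem : ∀ {p q}, (f p, f q) ∈ E.map (f.toEmbedding.prodMap f.toEmbedding) ↔ (p, q) ∈ E :=
    fun {p q} => mem_map' (f.toEmbedding.prodMap f.toEmbedding) (a := (p, q))
  constructor
  · refine fun h => ⟨fun {p q} hpq => ?_, fun {p q r s} hpq hrs => ?_⟩
    · simpa only [f.le_iff_le, f.lt_iff_lt] using h.bounds (hmem.2 hpq)
    · simpa only [f.lt_iff_lt] using h.not_cross (hmem.2 hpq) (hmem.2 hrs)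
  · refine fun h => ⟨fun {p q} hpq => ?_, fun {p q r s} hpq hrs => ?_⟩
    · obtain ⟨⟨p, q⟩, hpq', heq⟩ := mem_map.1 hpq
      obtain ⟨rfl, rfl⟩ := Prod.mk.inj heq
      simpa only [RelEmbedding.coe_toEmbedding, f.le_iff_le, f.lt_iff_lt] using h.bounds hpq'
    · obtain ⟨⟨p, q⟩, hpq', heq⟩ := mem_map.1 hpq
      obtain ⟨rfl, rfl⟩ := Prod.mk.inj heq
      obtain ⟨⟨r, s⟩, hrs', heq⟩ := mem_map.1 hrs
      obtain ⟨rfl, rfl⟩ := Prod.mk.inj heq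
      simpa only [RelEmbedding.coe_toEmbedding, f.lt_iff_lt] using h.not_cross hpq' hrs'

variable [LocallyFiniteOrder α] [LocallyFiniteOrder β]

theorem connectedNC_map (hf : f '' Set.Icc a b = Set.Icc (f a) (f b)) :
    connectedNC (f a) (f b) =
      (connectedNC a b).map (mapEmbedding (f.toEmbedding.prodMap f.toEmbedding)).toEmbedding := by
  have hmap : ∀ E, E.map (f.toEmbedding.prodMap f.toEmbedding) ∈ connectedNC (f a) (f b) ↔
      E ∈ connectedNC a b := fun E => by
    rw [mem_connectedNC, mem_connectedNC, isNoncrossingOn_map, ← hf]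
    exact and_congr_right' (connectedOn_image_map f.toEmbedding)
  ext F
  simp only [mem_map, RelEmbedding.coe_toEmbedding, mapEmbedding_apply]
  refine ⟨fun hF => ?_, ?_⟩
  · have hrange : F ⊆ (Icc a b ×ˢ Icc a b).map (f.toEmbedding.prodMap f.toEmbedding) := by
      rintro ⟨p, q⟩ h
      obtain ⟨hap, hpq, hqb⟩ := (mem_connectedNC.1 hF).1.bounds h
      obtain ⟨p', hp', rfl⟩ := hf.ge ⟨hap, hpq.le.trans hqb⟩
      obtain ⟨q', hq', rfl⟩ := hf.ge ⟨hap.trans hpq.le, hqb⟩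
      exact mem_map.2 ⟨(p', q'), mem_product.2 ⟨mem_Icc.2 hp', mem_Icc.2 hq'⟩, rfl⟩
    obtain ⟨E, -, rfl⟩ := subset_map_iff.1 hrange
    exact ⟨E, (hmap E).1 hF, rfl⟩
  · rintro ⟨E, hE, rfl⟩
    exact (hmap E).2 hE

theorem sizeEnumerator_connectedNC_map (hf : f '' Set.Icc a b = Set.Icc (f a) (f b)) :
    sizeEnumerator (connectedNC (f a) (f b)) = sizeEnumerator (connectedNC a b) := by
  rw [connectedNC_map hf, sizeEnumerator_map_mapEmbedding]

end Transport

section Recurrences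

open Polynomial

theorem sizeEnumerator_sups_connectedNC {α : Type*} [LinearOrder α] [LocallyFiniteOrder α]
    {a b i j : α} {𝒜 : Finset (Finset (α × α))} (h𝒜 : 𝒜 ⊆ connectedNC a i) (hij : i ≤ j) :
    sizeEnumerator (𝒜 ⊻ connectedNC j b) =
      sizeEnumerator 𝒜 * sizeEnumerator (connectedNC j b) := by
  refine sizeEnumerator_sups (U := {e | e.2 ≤ i}) (fun A hA e he => ?_) fun B hB => ?_
  · exact ((mem_connectedNC.1 (h𝒜 hA)).1.bounds he).2.2
  · refine Set.disjoint_left.2 fun e (he : e.2 ≤ i) heB => ?_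
    obtain ⟨hje, hlt, -⟩ := (mem_connectedNC.1 hB).1.bounds heB
    exact (hlt.trans_le (he.trans hij)).not_ge hje

/-- The generating polynomial, by number of edges, of the connected non-crossing graphs on the
`n + 1` vertices `0, …, n`. -/
noncomputable def connPoly (n : ℕ) : ℤ[X] :=
  sizeEnumerator (connectedNC 0 n)

/-- The generating polynomial, by number of edges, of the connected non-crossing graphs on the
`n + 1` vertices `0, …, n` that contain the edge joining `0` and `n`. -/
noncomputable def basedPoly (n : ℕ) : ℤ[X] :=
  sizeEnumerator (basedNC 0 n)

theorem connPoly_zero : connPoly 0 = 1 := by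
  have h : connectedNC 0 0 = {(∅ : Finset (ℕ × ℕ))} := by
    ext E
    rw [mem_connectedNC, mem_singleton]
    constructor
    · rintro ⟨hnc, -⟩
      refine eq_empty_of_forall_notMem fun e he => ?_
      have := hnc.bounds he
      omega
    · rintro rfl
      refine ⟨⟨by simp, by simp⟩, fun x hx y hy => ?_⟩
      rw [Set.Icc_self, Set.mem_singleton_iff] at hx hy
      rw [hx, hy]
  rw [connPoly, h, sizeEnumerator, sum_singleton, card_empty, pow_zero]

theorem sizeEnumerator_connectedNC_add (a n : ℕ) :
    sizeEnumerator (connectedNC a (a + n)) = connPoly n :=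
  sizeEnumerator_connectedNC_map (f := OrderEmbedding.addLeft a) (a := 0) (b := n)
    (Set.image_const_add_Icc a 0 n)

theorem sizeEnumerator_sups_connectedNC_eq_mul_connPoly {a b i j : ℕ}
    {𝒜 : Finset (Finset (ℕ × ℕ))} (h𝒜 : 𝒜 ⊆ connectedNC a i) (hij : i ≤ j) (hjb : j ≤ b) :
    sizeEnumerator (𝒜 ⊻ connectedNC j b) = sizeEnumerator 𝒜 * connPoly (b - j) := by
  obtain ⟨n, rfl⟩ := Nat.exists_eq_add_of_le hjb
  rw [sizeEnumerator_sups_connectedNC h𝒜 hij, sizeEnumerator_connectedNC_add,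
    add_tsub_cancel_left]

theorem connPoly_succ (n : ℕ) :
    connPoly (n + 1) = ∑ ij ∈ antidiagonal n, basedPoly (ij.1 + 1) * connPoly ij.2 := by
  have hterm : ∀ i ∈ range (n + 1), sizeEnumerator (basedNC 0 (i + 1) ⊻ connectedNC (i + 1) (n + 1))
      = basedPoly (i + 1) * connPoly (n - i) := by
    intro i hi
    rw [sizeEnumerator_sups_connectedNC_eq_mul_connPoly (basedNC_subset _ _) le_rfl
      (mem_range.1 hi), basedPoly, Nat.add_sub_add_right]
  have hIoc : Ioc 0 (n + 1) = Ico (0 + 1) (n + 1 + 1) := by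
    ext
    simp only [mem_Ioc, mem_Ico]
    omega
  rw [Nat.sum_antidiagonal_eq_sum_range_succ_mk, ← sum_congr rfl hterm, connPoly,
    connectedNC_eq_biUnion n.succ_pos, sizeEnumerator_biUnion (pairwiseDisjoint_basedNC_sups 0 _),
    hIoc, ← sum_Ico_add', range_eq_Ico]

theorem basedPoly_succ (n : ℕ) :
    basedPoly (n + 1) = X * (connPoly (n + 1) - basedPoly (n + 1) +
      ∑ ij ∈ antidiagonal n, connPoly ij.1 * connPoly ij.2) := by
  have hterm : ∀ i ∈ range (n + 1), sizeEnumerator (connectedNC 0 i ⊻ connectedNC (i + 1) (n + 1))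
      = connPoly i * connPoly (n - i) := by
    intro i hi
    rw [sizeEnumerator_sups_connectedNC_eq_mul_connPoly subset_rfl i.le_succ (mem_range.1 hi),
      ← connPoly, Nat.add_sub_add_right]
  have hbase : ∀ E ∈ connectedNC 0 (n + 1) \ basedNC 0 (n + 1) ∪
      (Ico 0 (n + 1)).biUnion fun i => connectedNC 0 i ⊻ connectedNC (i + 1) (n + 1),
      (0, n + 1) ∉ E := by
    intro E hE hmem
    rcases mem_union.1 hE with hE | hE
    · obtain ⟨hE, hE'⟩ := mem_sdiff.1 hE
      exact hE' (mem_basedNC.2 ⟨hE, hmem⟩)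
    · obtain ⟨i, hi, hE⟩ := mem_biUnion.1 hE
      have := isGap_of_mem_sups hE 0 (n + 1) hmem
      have := mem_Ico.1 hi
      omega
  rw [Nat.sum_antidiagonal_eq_sum_range_succ_mk, ← sum_congr rfl hterm]
  conv_lhs => rw [basedPoly, basedNC_eq_sups n.succ_pos, sizeEnumerator_singleton_sups hbase]
  rw [sizeEnumerator_union ((disjoint_connectedNC_biUnion_gap_sups 0 _).mono_left sdiff_subset),
    sizeEnumerator_sdiff (basedNC_subset _ _),
    sizeEnumerator_biUnion (pairwiseDisjoint_gap_sups 0 _), range_eq_Ico, connPoly, basedPoly]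

end Recurrences

section LagrangeInversion

open PowerSeries

variable {R : Type*} [CommRing R] {φ Y : R⟦X⟧}

theorem subst_C_eq_C (c : R) (Y : R⟦X⟧) : (C c).subst Y = (C c : R⟦X⟧) :=
  subst_C c

theorem subst_one_eq_one (Y : R⟦X⟧) : (1 : R⟦X⟧).subst Y = (1 : R⟦X⟧) := by
  rw [← map_one C, subst_C_eq_C]

theorem subst_X_mul_of_eq_X_mul_subst (hY₀ : constantCoeff Y = 0) (hY : Y = X * φ.subst Y)
    (H : R⟦X⟧) : (X * H).subst Y = X * (φ * H).subst Y := by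
  have hs : HasSubst Y := .of_constantCoeff_zero' hY₀
  rw [subst_mul hs, subst_mul hs, subst_X hs, ← mul_assoc, ← hY]

theorem constantCoeff_subst_of_eq_X_mul_subst (hY₀ : constantCoeff Y = 0) (hY : Y = X * φ.subst Y)
    (H : R⟦X⟧) : constantCoeff (H.subst Y) = constantCoeff H := by
  have hs : HasSubst Y := .of_constantCoeff_zero' hY₀
  conv_lhs =>
    rw [eq_X_mul_shift_add_const H, subst_add hs, subst_X_mul_of_eq_X_mul_subst hY₀ hY,
      subst_C_eq_C]
  rw [map_add, map_mul, constantCoeff_X, zero_mul, zero_add, constantCoeff_C]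

theorem coeff_derivative_of_eq_X_mul_subst (hY : Y = X * φ.subst Y) (m : ℕ) :
    coeff m (d⁄dX R Y) = (m + 1) * coeff m (φ.subst Y) := by
  conv_lhs => rw [coeff_derivative, hY, coeff_succ_X_mul, mul_comm]

/-- Lagrange–Bürmann inversion. The power series `H` must vary for the induction: its nonconstant
part `X * H₁` reduces to `φ * H₁` at the previous index, its constant part to `φ'`. -/
theorem coeff_subst_mul_derivative [IsAddTorsionFree R] (hY₀ : constantCoeff Y = 0)
    (hY : Y = X * φ.subst Y) (m : ℕ) (H : R⟦X⟧) :
    coeff m (H.subst Y * d⁄dX R Y) = coeff m (H * φ ^ (m + 1)) := by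
  have hs : HasSubst Y := .of_constantCoeff_zero' hY₀
  induction m generalizing H with
  | zero =>
    have hY' := coeff_derivative_of_eq_X_mul_subst hY 0
    simp only [coeff_zero_eq_constantCoeff_apply, map_mul, Nat.cast_zero, zero_add, one_mul,
      constantCoeff_subst_of_eq_X_mul_subst hY₀ hY, pow_one] at hY' ⊢
    rw [hY']
  | succ m ih =>
    have hconst : coeff (m + 1) (d⁄dX R Y) = coeff (m + 1) (φ ^ (m + 2)) := by
      have hφ : coeff (m + 1) (φ.subst Y) * (m + 1) = coeff m (d⁄dX R φ * φ ^ (m + 1)) := by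
        rw [← coeff_derivative, derivative_subst hs, ih]
      have hpow : coeff (m + 1) (φ ^ (m + 2)) * (m + 1) =
          (m + 2) * coeff m (d⁄dX R φ * φ ^ (m + 1)) := by
        rw [← coeff_derivative, Derivation.leibniz_pow, map_nsmul, nsmul_eq_mul, smul_eq_mul,
          mul_comm (d⁄dX R φ)]
        push_cast
        rfl
      refine nsmul_right_injective m.succ_ne_zero ?_
      simp only [nsmul_eq_mul, coeff_derivative_of_eq_X_mul_subst hY, Nat.cast_succ]
      linear_combination (m + 2) * hφ - hpow
    rw [eq_X_mul_shift_add_const H]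
    generalize PowerSeries.mk _ = H₁, constantCoeff H = c
    rw [subst_add hs, subst_X_mul_of_eq_X_mul_subst hY₀ hY, subst_C_eq_C, add_mul, add_mul, map_add,
      map_add, coeff_C_mul, coeff_C_mul, hconst, mul_assoc, mul_assoc, coeff_succ_X_mul,
      coeff_succ_X_mul, ih, mul_assoc, mul_left_comm, ← pow_succ']

theorem succ_mul_coeff_succ_of_eq_X_mul_subst [IsAddTorsionFree R] (hY₀ : constantCoeff Y = 0)
    (hY : Y = X * φ.subst Y) (m : ℕ) : (m + 1) * coeff (m + 1) Y = coeff m (φ ^ (m + 1)) := by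
  have h := coeff_subst_mul_derivative hY₀ hY m 1
  rwa [subst_one_eq_one, one_mul, one_mul, coeff_derivative, mul_comm] at h

end LagrangeInversion

section AlgebraicEquation

open PowerSeries

variable {R : Type*} [CommRing R] {w : R} {d : ℕ} {Y : R⟦X⟧}

theorem rescale_mk_one_mul_one_sub (w : R) : rescale w (PowerSeries.mk 1) * (1 - C w * X) = 1 := by
  rw [← rescale_X, ← map_one (rescale w), ← map_sub, ← map_mul, mk_one_mul_one_sub_eq_one]

theorem coeff_one_add_X_pow_mul_rescale_pow (w : R) (d m : ℕ) :
    coeff m ((C w * (1 + X) ^ d * rescale w (PowerSeries.mk 1)) ^ (m + 1)) =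
      ∑ ij ∈ antidiagonal m,
        ((d * (m + 1)).choose ij.1 * (m + ij.2).choose m : ℕ) * w ^ (m + 1 + ij.2) := by
  have hbinom : (1 + X : R⟦X⟧) ^ (d * (m + 1)) =
      ((1 + Polynomial.X : Polynomial R) ^ (d * (m + 1)) : Polynomial R) := by
    simp only [Polynomial.coe_pow, Polynomial.coe_add, Polynomial.coe_one, Polynomial.coe_X]
  rw [mul_pow, mul_pow, ← pow_mul, hbinom, ← map_pow, ← map_pow, mk_one_pow_eq_mk_choose_add,
    mul_assoc, coeff_C_mul, coeff_mul, mul_sum]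
  refine sum_congr rfl fun ij _ => ?_
  rw [Polynomial.coeff_coe, Polynomial.coeff_one_add_X_pow, coeff_rescale, coeff_mk]
  push_cast
  ring

theorem eq_X_mul_subst_of_mul_one_sub_eq (hY₀ : constantCoeff Y = 0)
    (hY : Y * (1 - C w * Y) = X * (C w * (1 + Y) ^ d)) :
    Y = X * (C w * (1 + X) ^ d * rescale w (PowerSeries.mk 1)).subst Y := by
  have hs : HasSubst Y := .of_constantCoeff_zero' hY₀
  have hinv : (rescale w (PowerSeries.mk 1)).subst Y * (1 - C w * Y) = 1 := by
    have h := congrArg (subst Y) (rescale_mk_one_mul_one_sub w)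
    simpa only [subst_mul hs, subst_sub hs, subst_one_eq_one, subst_C_eq_C, subst_X hs] using h
  simp only [subst_mul hs, subst_pow hs, subst_add hs, subst_one_eq_one, subst_C_eq_C, subst_X hs]
  linear_combination (rescale w (PowerSeries.mk 1)).subst Y * hY - Y * hinv

theorem succ_mul_coeff_succ_of_mul_one_sub_eq [IsAddTorsionFree R] (hY₀ : constantCoeff Y = 0)
    (hY : Y * (1 - C w * Y) = X * (C w * (1 + Y) ^ d)) (m : ℕ) :
    (m + 1) * coeff (m + 1) Y = ∑ ij ∈ antidiagonal m,
      ((d * (m + 1)).choose ij.1 * (m + ij.2).choose m : ℕ) * w ^ (m + 1 + ij.2) := by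
  rw [succ_mul_coeff_succ_of_eq_X_mul_subst hY₀ (eq_X_mul_subst_of_mul_one_sub_eq hY₀ hY),
    coeff_one_add_X_pow_mul_rescale_pow]

end AlgebraicEquation

section Counting

open PowerSeries

/-- The generating series of the connected non-crossing graphs, by number of vertices minus one and
by number of edges. -/
noncomputable def connSeries : (Polynomial ℤ)⟦X⟧ :=
  PowerSeries.mk connPoly

theorem constantCoeff_connSeries_sub_one : constantCoeff (connSeries - 1) = 0 := by
  rw [map_sub, map_one, ← coeff_zero_eq_constantCoeff_apply, connSeries, coeff_mk, connPoly_zero,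
    sub_self]

theorem connSeries_sub_one_mul_one_sub :
    (connSeries - 1) * (1 - C Polynomial.X * (connSeries - 1)) =
      X * (C Polynomial.X * (1 + (connSeries - 1)) ^ 3) := by
  set A := connSeries with hA
  set B : (Polynomial ℤ)⟦X⟧ := PowerSeries.mk fun n => basedPoly (n + 1) with hB
  have hconn : A = 1 + X * (B * A) := by
    ext1 n
    rcases n with _ | n
    · simp [hA, connSeries, connPoly_zero]
    · rw [map_add, coeff_succ_X_mul, coeff_mul, coeff_one, if_neg n.succ_ne_zero, zero_add]
      simp only [hA, hB, connSeries, coeff_mk, connPoly_succ]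
  have hbased : X * B = C Polynomial.X * (A - 1 - X * B + X * (A * A)) := by
    ext1 n
    rcases n with _ | n
    · simp [hA, connSeries, connPoly_zero]
    · rw [coeff_C_mul, map_add, map_sub, map_sub, coeff_succ_X_mul, coeff_succ_X_mul, coeff_mul,
        coeff_one, if_neg n.succ_ne_zero, sub_zero]
      simp only [hA, hB, connSeries, coeff_mk]
      exact basedPoly_succ n
  linear_combination (1 + C Polynomial.X) * hconn + A * hbased

theorem succ_mul_connPoly_succ (m : ℕ) :
    (m + 1 : Polynomial ℤ) * connPoly (m + 1) = ∑ ij ∈ antidiagonal m,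
      ((3 * (m + 1)).choose ij.1 * (m + ij.2).choose m : ℕ) * Polynomial.X ^ (m + 1 + ij.2) := by
  rw [← succ_mul_coeff_succ_of_mul_one_sub_eq constantCoeff_connSeries_sub_one
    connSeries_sub_one_mul_one_sub, map_sub, coeff_one, if_neg m.succ_ne_zero, sub_zero,
    connSeries, coeff_mk]

theorem succ_mul_coeff_connPoly_succ (m : ℕ) {k : ℕ} (hk : 1 ≤ k) :
    (m + 1) * (connPoly (m + 1)).coeff k =
      ((3 * (m + 1)).choose (m + 2 + k) * (k - 1).choose m : ℕ) := by
  have hcoeff : (m + 1) * (connPoly (m + 1)).coeff k = ∑ ij ∈ antidiagonal m,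
      if k = m + 1 + ij.2 then
        (((3 * (m + 1)).choose ij.1 * (m + ij.2).choose m : ℕ) : ℤ) else 0 := by
    have h := congrArg (Polynomial.coeff · k) (succ_mul_connPoly_succ m)
    simp only [Polynomial.finsetSum_coeff, Polynomial.coeff_natCast_mul, Polynomial.coeff_X_pow,
      mul_ite, mul_one, mul_zero] at h
    rw [← h, ← Nat.cast_succ, ← Nat.cast_succ, Polynomial.coeff_natCast_mul]
  rw [hcoeff]
  by_cases hrange : m + 1 ≤ k ∧ k ≤ 2 * m + 1
  · have hsymm : (3 * (m + 1)).choose (2 * m + 1 - k) = (3 * (m + 1)).choose (m + 2 + k) :=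
      Nat.choose_symm_of_eq_add (by omega)
    have hmem : (2 * m + 1 - k, k - (m + 1)) ∈ antidiagonal m := by
      rw [HasAntidiagonal.mem_antidiagonal]
      omega
    rw [sum_eq_single_of_mem _ hmem, if_pos (by omega), hsymm,
      show m + (k - (m + 1)) = k - 1 by omega]
    rintro ⟨i, j⟩ hij hne
    refine if_neg fun hkj => hne ?_
    rw [HasAntidiagonal.mem_antidiagonal] at hij
    refine Prod.ext ?_ ?_ <;> dsimp only at hij hkj ⊢ <;> omega
  · rw [sum_eq_zero]
    · have hzero : (3 * (m + 1)).choose (m + 2 + k) = 0 ∨ (k - 1).choose m = 0 := by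
        simp only [Nat.choose_eq_zero_iff]
        omega
      rw [Nat.mul_eq_zero.2 hzero, Nat.cast_zero]
    · rintro ⟨i, j⟩ hij
      refine if_neg fun hkj => hrange ?_
      rw [HasAntidiagonal.mem_antidiagonal] at hij
      dsimp only at hij hkj
      omega

end Counting

section Encoding

/-- The chord `s(p, q)`, `p ≤ q`, as the ordered pair `(p, q)`. -/
def sortedPair {α : Type*} [LinearOrder α] : Sym2 α ↪ α × α :=
  Sym2.sortEquiv.toEmbedding.trans (Function.Embedding.subtype _)

theorem mem_map_sortedPair {α : Type*} [LinearOrder α] {E : Finset (Sym2 α)} {p q : α} :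
    (p, q) ∈ E.map sortedPair ↔ p ≤ q ∧ s(p, q) ∈ E := by
  have hpair (h : p ≤ q) : sortedPair s(p, q) = (p, q) :=
    Prod.ext (inf_eq_left.2 h) (sup_eq_right.2 h)
  constructor
  · intro h
    obtain ⟨e, he, hpq⟩ := mem_map.1 h
    have hle : p ≤ q := by
      obtain ⟨rfl, rfl⟩ := Prod.mk.inj hpq
      exact (Sym2.sortEquiv e).2
    rw [← hpair hle, sortedPair.apply_eq_iff_eq] at hpq
    exact ⟨hle, hpq ▸ he⟩
  · rintro ⟨hle, he⟩
    exact mem_map.2 ⟨_, he, hpair hle⟩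

variable {m : ℕ} {E : Finset (Sym2 (Fin (m + 1)))}

theorem isNC_iff_isNoncrossingOn :
    IsNC E ↔ IsNoncrossingOn 0 (Fin.last m) (E.map sortedPair) := by
  constructor
  · rintro ⟨hdiag, hcross⟩
    refine ⟨fun {p q} h => ?_, fun {p q r s} hpq hrs => ?_⟩
    · obtain ⟨hpq, hE⟩ := mem_map_sortedPair.1 h
      exact ⟨Fin.zero_le p, hpq.lt_of_ne (hdiag _ hE), Fin.le_last q⟩
    · intro hlt
      exact hcross _ (mem_map_sortedPair.1 hpq).2 _ (mem_map_sortedPair.1 hrs).2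
        ⟨p, q, r, s, rfl, rfl, hlt⟩
  · refine fun h => ⟨fun e he hdiag => ?_, ?_⟩
    · induction e with | _ p q
      obtain rfl : p = q := hdiag
      exact (h.bounds (mem_map_sortedPair.2 ⟨le_rfl, he⟩)).2.1.false
    · rintro _ he _ hf ⟨p, q, r, s, rfl, rfl, hpr, hrq, hqs⟩
      exact h.not_cross (mem_map_sortedPair.2 ⟨(hpr.trans hrq).le, he⟩)
        (mem_map_sortedPair.2 ⟨(hrq.trans hqs).le, hf⟩) ⟨hpr, hrq, hqs⟩

theorem graphOf_eq_chordGraph : graphOf E = chordGraph (E.map sortedPair) := by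
  ext p q
  rw [graphOf, SimpleGraph.fromEdgeSet_adj, chordGraph_adj, mem_map_sortedPair, mem_map_sortedPair,
    Sym2.eq_swap (a := q), ← or_and_right, and_iff_right (le_total p q), and_comm, mem_coe]

theorem isNCC_iff_mem_connectedNC :
    IsNCC E ↔ E.map sortedPair ∈ connectedNC 0 (Fin.last m) := by
  rw [mem_connectedNC, IsNCC, isNC_iff_isNoncrossingOn, SimpleGraph.connected_iff,
    and_iff_left (b := Nonempty _) ⟨0⟩, graphOf_eq_chordGraph]
  exact and_congr_right' ⟨fun h x _ y _ => h x y,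
    fun h x y => h x ⟨Fin.zero_le x, Fin.le_last x⟩ y ⟨Fin.zero_le y, Fin.le_last y⟩⟩

open Classical in
theorem connectedNC_zero_last : connectedNC 0 (Fin.last m) =
    ({E | IsNCC E} : Finset _).map (mapEmbedding sortedPair).toEmbedding := by
  ext F
  simp only [mem_map, mem_filter_univ, RelEmbedding.coe_toEmbedding, mapEmbedding_apply]
  constructor
  · intro hF
    have hrange : F ⊆ univ.map sortedPair := fun ⟨p, q⟩ h =>
      mem_map_sortedPair.2 ⟨((mem_connectedNC.1 hF).1.bounds h).2.1.le, mem_univ _⟩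
    obtain ⟨E, -, rfl⟩ := subset_map_iff.1 hrange
    exact ⟨E, isNCC_iff_mem_connectedNC.2 hF, rfl⟩
  · rintro ⟨E, hE, rfl⟩
    exact isNCC_iff_mem_connectedNC.1 hE

theorem ncc_succ_eq_coeff_connPoly (m k : ℕ) : ncc (m + 1) k = (connPoly m).coeff k := by
  classical
  have hval := sizeEnumerator_connectedNC_map (f := Fin.valOrderEmb (m + 1))
    (Fin.image_val_Icc 0 (Fin.last m))
  rw [Fin.valOrderEmb_apply, Fin.valOrderEmb_apply, Fin.val_last, Fin.val_zero] at hval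
  rw [connPoly, hval, connectedNC_zero_last, sizeEnumerator_map_mapEmbedding, coeff_sizeEnumerator,
    filter_filter, ncc, Nat.card_eq_fintype_card, Fintype.card_subtype]

end Encoding

theorem stmt7_general {n k : ℕ} (hn : 2 ≤ n) (hk : 1 ≤ k) :
    (n - 1) * ncc n k = Nat.choose (3 * n - 3) (n + k) * Nat.choose (k - 1) (n - 2) := by
  obtain ⟨m, rfl⟩ := Nat.exists_eq_add_of_le' hn
  have h := succ_mul_coeff_connPoly_succ m hk
  rw [← ncc_succ_eq_coeff_connPoly] at h
  exact_mod_cast h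

/-- Flajolet–Noy: the number of non-crossing connected graphs on `n` vertices with
`k` edges (`n-1 ≤ k ≤ 2n-3`) equals `(1/(n-1))·C(3n-3, n+k)·C(k-1, n-2)`,
stated multiplied through by `n-1`. -/
theorem stmt7 (n k : ℕ) (hnk : (n : ℤ) - 1 ≤ (k : ℤ))
    (hk : (k : ℤ) ≤ 2 * (n : ℤ) - 3) :
    (n - 1) * ncc n k = Nat.choose (3 * n - 3) (n + k) * Nat.choose (k - 1) (n - 2) :=
  stmt7_general (by omega) (by omega)
end

section
/- Let c_{n,k} = (1/(n-1))binom(3n-3,n+k)binom(k-1,n-2), d_{n,k} = (2/(n-2))binom(3n-5,n+k)binom(k-1,n-3), and let f_{n,k} be the number of non-crossing connected graphs on {1,...,n} with k edges that contain the edge {1,n}. Then for n ≥ 3 and n-1 ≤ k ≤ 2n-4, f_{n,k} + f_{n,k+1} = c_{n,k} + d_{n,k}. -/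
/-- Number of non-crossing graphs on `n` vertices with `k` edges having exactly two
connected components, with vertices `1` and `n` in different components. -/
noncomputable def nccTwoComp (n k : ℕ) : ℕ :=
  Nat.card {E : Finset (Sym2 (Fin n)) // IsNC E ∧ E.card = k ∧
    Nat.card (graphOf E).ConnectedComponent = 2 ∧
    ∀ a b : Fin n, (a : ℕ) = 0 → (b : ℕ) = n - 1 → ¬ (graphOf E).Reachable a b}

/-!
Write `C`, `F`, `D` for the generating series, with `x` marking vertices after the first and `t`
marking edges, of noncrossing connected graphs, of those containing the edge `{1, n}`, and of the
two-component graphs separating `1` from `n`. Adding or deleting the edge `{1, n}` gives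
`(1 + t) F = t (C - 1 + D)`, so `f_{n,k} + f_{n,k+1}` is the coefficient of `x ^ (n - 1) t ^ k` in
`C + D`. A graph counted by `D` consists of connected graphs on `{1, …, i}` and `{i + 1, …, n}`,
so `D = x C²`; splitting a connected graph at the last neighbour of vertex `1` gives `C = 1 + F C`.
Eliminating `F` and `D`, the series `y = C - 1` satisfies `y (1 - t y) = t x (1 + y)³`, and Lagrange
inversion yields the coefficients of `C` and of `C²`.
-/

section LagrangeInversion

open PowerSeries
open Finset.HasAntidiagonal (antidiagonal)

variable {R : Type*} [CommRing R]

theorem coeff_subst_eq_sum_range {y : R⟦X⟧} (hy : constantCoeff y = 0) (H : R⟦X⟧) (n : ℕ) :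
    coeff n (H.subst y) = ∑ m ∈ Finset.range (n + 1), coeff m H * coeff n (y ^ m) := by
  rw [coeff_subst' (HasSubst.of_constantCoeff_zero' hy)]
  refine finsum_eq_sum_of_support_subset _ fun m hm => ?_
  by_contra hmn
  have hnm : n < m := by simpa using hmn
  have hX : (X : R⟦X⟧) ^ m ∣ y ^ m := pow_dvd_pow_of_dvd (X_dvd_iff.mpr hy) m
  exact hm (by simp only [X_pow_dvd_iff.mp hX n hnm, smul_zero])

theorem succ_mul_coeff_subst_of_coeff_pow {φ y : R⟦X⟧} (hy : constantCoeff y = 0) {n : ℕ}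
    (hpow : ∀ m ≤ n, ((n : R) + 1) * coeff (n + 1) (y ^ (m + 1)) =
      ((m : R) + 1) * coeff (n - m) (φ ^ (n + 1))) (H : R⟦X⟧) :
    ((n : R) + 1) * coeff (n + 1) (H.subst y) = coeff n (d⁄dX R H * φ ^ (n + 1)) := by
  rw [coeff_subst_eq_sum_range hy, Finset.sum_range_succ', coeff_mul,
    Finset.Nat.sum_antidiagonal_eq_sum_range_succ_mk, pow_zero, coeff_one, if_neg n.succ_ne_zero,
    mul_zero, add_zero, Finset.mul_sum]
  refine Finset.sum_congr rfl fun m hm => ?_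
  rw [mul_left_comm, hpow m (Finset.mem_range_succ_iff.mp hm), coeff_derivative, mul_assoc]

theorem succ_mul_coeff_pow_of_eq_X_mul_subst [IsAddTorsionFree R] {φ y : R⟦X⟧}
    (hy : constantCoeff y = 0) (h : y = X * φ.subst y) (n : ℕ) :
    ∀ m ≤ n, ((n : R) + 1) * coeff (n + 1) (y ^ (m + 1)) =
      ((m : R) + 1) * coeff (n - m) (φ ^ (n + 1)) := by
  induction n using Nat.strong_induction_on with
  | _ n ih =>
  intro m hm
  have hcoeff : coeff (n + 1) (y ^ (m + 1)) = coeff (n - m) ((φ ^ (m + 1)).subst y) := by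
    have hpow := congrArg (· ^ (m + 1)) h
    simp only [mul_pow, ← subst_pow (HasSubst.of_constantCoeff_zero' hy)] at hpow
    rw [hpow, show n + 1 = n - m + (m + 1) by lia, coeff_X_pow_mul]
  rw [hcoeff]
  obtain rfl | hlt := hm.eq_or_lt
  · simp [coeff_subst_eq_sum_range hy]
  · obtain ⟨j, rfl⟩ := Nat.exists_eq_add_of_lt hlt
    have hj : m + j + 1 - m = j + 1 := by lia
    have ih_j := succ_mul_coeff_subst_of_coeff_pow hy (ih j (by lia)) (φ ^ (m + 1))
    have hderiv : ((m + j + 1 + 1 : ℕ) : R⟦X⟧) * (d⁄dX R (φ ^ (m + 1)) * φ ^ (j + 1)) =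
        ((m + 1 : ℕ) : R⟦X⟧) * d⁄dX R (φ ^ (m + j + 1 + 1)) := by
      simp only [derivative_pow, Nat.add_sub_cancel]
      ring
    have hderiv_coeff := congrArg (coeff j) hderiv
    simp only [← nsmul_eq_mul, map_nsmul, coeff_derivative, ← ih_j] at hderiv_coeff
    rw [hj]
    refine nsmul_right_injective j.succ_ne_zero ?_
    simp only [nsmul_eq_mul] at hderiv_coeff ⊢
    push_cast at hderiv_coeff ⊢
    linear_combination hderiv_coeff

theorem lagrange_inversion [IsAddTorsionFree R] {φ y : R⟦X⟧} (h : y = X * φ.subst y) (H : R⟦X⟧)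
    (n : ℕ) :
    ((n : R) + 1) * coeff (n + 1) (H.subst y) = coeff n (d⁄dX R H * φ ^ (n + 1)) := by
  have hy : constantCoeff y = 0 := by rw [h]; simp
  exact succ_mul_coeff_subst_of_coeff_pow hy (succ_mul_coeff_pow_of_eq_X_mul_subst hy h n) H

/-- The power series `1 / (1 - w X)`. -/
noncomputable def geometricSeries (w : R) : R⟦X⟧ := rescale w (mk 1)

theorem geometricSeries_mul_one_sub (w : R) : geometricSeries w * (1 - C w * X) = 1 := by
  simpa [geometricSeries, rescale_X] using congrArg (rescale w) (mk_one_mul_one_sub_eq_one R)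

theorem coeff_geometricSeries_pow (w : R) (d j : ℕ) :
    coeff j (geometricSeries w ^ (d + 1)) = w ^ j * ((d + j).choose d : R) := by
  rw [geometricSeries, ← map_pow, mk_one_pow_eq_mk_choose_add, coeff_rescale, coeff_mk]

theorem coeff_one_add_X_pow_powerSeries (M i : ℕ) :
    coeff i ((1 + X : R⟦X⟧) ^ M) = (M.choose i : R) := by
  simpa using (Polynomial.coeff_coe ((1 + Polynomial.X : Polynomial R) ^ M) i).trans
    (Polynomial.coeff_one_add_X_pow R M i)

theorem eq_X_mul_subst_of_mul_one_sub_eq_s9 (w : R) {y : R⟦X⟧} (hy : constantCoeff y = 0)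
    (h : y * (1 - C w * y) = C w * X * (1 + y) ^ 3) :
    y = X * (C w * ((1 + X) ^ 3 * geometricSeries w)).subst y := by
  have hs : HasSubst y := HasSubst.of_constantCoeff_zero' hy
  have hC (r : R) : (C r).subst y = C r := subst_C r
  have hone : (1 : R⟦X⟧).subst y = 1 := by simpa using hC 1
  have hgeom : (geometricSeries w).subst y * (1 - C w * y) = 1 := by
    simpa only [subst_mul hs, subst_sub hs, subst_X hs, hC, hone] using
      congrArg (subst y) (geometricSeries_mul_one_sub w)
  rw [subst_mul hs, subst_mul hs, subst_pow hs, subst_add hs, subst_X hs, hC, hone]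
  linear_combination (geometricSeries w).subst y * h - y * hgeom

theorem succ_mul_coeff_one_add_pow_of_mul_one_sub_eq [IsAddTorsionFree R] (w : R) {y : R⟦X⟧}
    (hy : constantCoeff y = 0) (h : y * (1 - C w * y) = C w * X * (1 + y) ^ 3) (s d : ℕ) :
    ((d : R) + 1) * coeff (d + 1) ((1 + y) ^ (s + 1)) =
      ((s : R) + 1) * (w ^ (d + 1) * ∑ ij ∈ antidiagonal d,
        ((3 * (d + 1) + s).choose ij.1 : R) * (w ^ ij.2 * ((d + ij.2).choose d : R))) := by
  have hs : HasSubst y := HasSubst.of_constantCoeff_zero' hy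
  have hsubst : ((1 + X : R⟦X⟧) ^ (s + 1)).subst y = (1 + y) ^ (s + 1) := by
    simp only [← coe_substAlgHom hs, map_pow, map_add, map_one, substAlgHom_X]
  have hcoeff : d⁄dX R ((1 + X : R⟦X⟧) ^ (s + 1)) *
      (C w * ((1 + X) ^ 3 * geometricSeries w)) ^ (d + 1) =
      C (((s : R) + 1) * w ^ (d + 1)) *
        ((1 + X) ^ (3 * (d + 1) + s) * geometricSeries w ^ (d + 1)) := by
    have hderiv : d⁄dX R (1 + X : R⟦X⟧) = 1 := by
      rw [map_add, derivative_one, derivative_X, zero_add]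
    simp only [derivative_pow, hderiv, map_add, map_mul, map_pow, map_one, map_natCast,
      Nat.add_sub_cancel]
    generalize (1 + X : R⟦X⟧) = t
    push_cast
    ring
  rw [← hsubst, lagrange_inversion (eq_X_mul_subst_of_mul_one_sub_eq_s9 w hy h), hcoeff, coeff_C_mul,
    coeff_mul, mul_assoc]
  simp only [coeff_one_add_X_pow_powerSeries, coeff_geometricSeries_pow]

end LagrangeInversion

section CoefficientExtraction

open Polynomial
open Finset.HasAntidiagonal (antidiagonal)

theorem coeff_X_pow_mul_sum_choose (M d k : ℕ) :
    ((X : ℤ[X]) ^ (d + 1) * ∑ ij ∈ antidiagonal d,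
      ((2 * d + M).choose ij.1 : ℤ[X]) * (X ^ ij.2 * ((d + ij.2).choose d : ℤ[X]))).coeff (k + 1) =
      ((2 * d + M).choose (M + k) * k.choose d : ℤ) := by
  obtain hkd | hdk := lt_or_ge k d
  · rw [coeff_X_pow_mul', if_neg (by lia), Nat.choose_eq_zero_of_lt hkd, Nat.cast_zero, mul_zero]
  obtain ⟨j, rfl⟩ := Nat.exists_eq_add_of_le hdk
  have hterm (ij : ℕ × ℕ) : (((2 * d + M).choose ij.1 : ℤ[X]) *
      (X ^ ij.2 * ((d + ij.2).choose d : ℤ[X]))).coeff j =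
      if j = ij.2 then ((2 * d + M).choose ij.1 * (d + ij.2).choose d : ℤ) else 0 := by
    simp only [← C_eq_natCast, coeff_C_mul, coeff_mul_C, coeff_X_pow, ite_mul, mul_ite, one_mul,
      zero_mul, mul_zero]
  rw [show d + j + 1 = j + (d + 1) by ring, coeff_X_pow_mul, finsetSum_coeff,
    Finset.sum_congr rfl fun ij _ => hterm ij]
  obtain hjd | hdj := le_or_gt j d
  · rw [Finset.sum_eq_single_of_mem (d - j, j) (by simp [hjd]) ?_, if_pos rfl,
      Nat.choose_symm_of_eq_add (by lia : 2 * d + M = (d - j) + (M + (d + j)))]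
    intro ij hij hne
    refine if_neg fun hj => hne ?_
    rw [Finset.HasAntidiagonal.mem_antidiagonal] at hij
    exact Prod.ext (by simp; lia) hj.symm
  · rw [Nat.choose_eq_zero_of_lt (by lia : 2 * d + M < M + (d + j)), Nat.cast_zero, zero_mul]
    refine Finset.sum_eq_zero fun ij hij => if_neg ?_
    rw [Finset.HasAntidiagonal.mem_antidiagonal] at hij
    lia

end CoefficientExtraction

section EdgeGeneratingPolynomial

open Polynomial
open scoped FinsetFamily

variable {α β : Type*}

/-- The polynomial `∑ X ^ |A|` over the members `A` of a family of finite sets; for a family of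
graphs given by their edge sets it counts the members by number of edges. -/
noncomputable def edgeGenPoly (S : Finset (Finset α)) : ℤ[X] := ∑ A ∈ S, X ^ A.card

theorem coeff_edgeGenPoly (S : Finset (Finset α)) (k : ℕ) :
    (edgeGenPoly S).coeff k = ({A ∈ S | A.card = k}.card : ℤ) := by
  simp only [edgeGenPoly, finsetSum_coeff, coeff_X_pow, Finset.sum_boole, eq_comm]

theorem edgeGenPoly_eq_of_map_mem_iff (f : α ↪ β) {S : Finset (Finset α)} {T : Finset (Finset β)}
    (hT : ∀ B ∈ T, ∃ A : Finset α, A.map f = B) (hST : ∀ A : Finset α, A.map f ∈ T ↔ A ∈ S) :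
    edgeGenPoly T = edgeGenPoly S := by
  refine (Finset.sum_nbij (Finset.map f) (fun A hA => (hST A).mpr hA)
    (Finset.map_injective f).injOn (fun B hB => ?_) fun A _ => by rw [Finset.card_map]).symm
  obtain ⟨A, rfl⟩ := hT B hB
  exact ⟨A, (hST A).mp hB, rfl⟩

variable [DecidableEq α]

theorem edgeGenPoly_image_insert {a : α} {S : Finset (Finset α)} (ha : ∀ A ∈ S, a ∉ A) :
    edgeGenPoly (S.image (insert a)) = X * edgeGenPoly S := by
  have hinj : Set.InjOn (insert a) (S : Set (Finset α)) := fun A hA B hB hAB => by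
    rw [← Finset.erase_insert (ha A hA), ← Finset.erase_insert (ha B hB), hAB]
  rw [edgeGenPoly, Finset.sum_image hinj, edgeGenPoly, Finset.mul_sum]
  exact Finset.sum_congr rfl fun A hA => by rw [Finset.card_insert_of_notMem (ha A hA), pow_succ']

theorem edgeGenPoly_sups {U V : Finset α} (hUV : Disjoint U V) {S T : Finset (Finset α)}
    (hS : ∀ A ∈ S, A ⊆ U) (hT : ∀ B ∈ T, B ⊆ V) :
    edgeGenPoly (S ⊻ T) = edgeGenPoly S * edgeGenPoly T := by
  have hinj : Set.InjOn (Function.uncurry (· ⊔ ·)) (↑(S ×ˢ T) : Set (Finset α × Finset α)) := by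
    rintro ⟨A, B⟩ hAB ⟨A', B'⟩ hAB' heq
    obtain ⟨hA, hB⟩ := Finset.mem_product.mp hAB
    obtain ⟨hA', hB'⟩ := Finset.mem_product.mp hAB'
    have hU (A B : Finset α) (hA : A ⊆ U) (hB : B ⊆ V) : (A ∪ B) ∩ U = A ∧ (A ∪ B) ∩ V = B := by
      rw [Finset.union_inter_distrib_right, Finset.union_inter_distrib_right,
        Finset.inter_eq_left.mpr hA, Finset.inter_eq_left.mpr hB,
        Finset.disjoint_iff_inter_eq_empty.mp (hUV.symm.mono_left hB),
        Finset.disjoint_iff_inter_eq_empty.mp (hUV.mono_left hA), Finset.union_empty,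
        Finset.empty_union]
      exact ⟨rfl, rfl⟩
    obtain ⟨h₁, h₂⟩ := hU A B (hS A hA) (hT B hB)
    obtain ⟨h₁', h₂'⟩ := hU A' B' (hS A' hA') (hT B' hB')
    simp only [Function.uncurry_apply_pair, Finset.sup_eq_union] at heq
    exact Prod.ext (by rw [← h₁, heq, h₁']) (by rw [← h₂, heq, h₂'])
  rw [edgeGenPoly, ← Finset.image_sup_product, Finset.sum_image hinj, edgeGenPoly, edgeGenPoly,
    Finset.sum_mul_sum, Finset.sum_product]
  refine Finset.sum_congr rfl fun A hA => Finset.sum_congr rfl fun B hB => ?_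
  rw [← pow_add, ← Finset.card_union_of_disjoint (hUV.mono (hS A hA) (hT B hB))]
  rfl

end EdgeGeneratingPolynomial

section ArcSets

/-- The chords spanned by the vertices `l, l + 1, …, r` in convex position, each encoded by its
endpoints in increasing order. -/
def arcs (l r : ℕ) : Finset (ℕ × ℕ) := {e ∈ Finset.Icc l r ×ˢ Finset.Icc l r | e.1 < e.2}

theorem mem_arcs {l r : ℕ} {e : ℕ × ℕ} : e ∈ arcs l r ↔ l ≤ e.1 ∧ e.1 < e.2 ∧ e.2 ≤ r := by
  simp only [arcs, Finset.mem_filter, Finset.mem_product, Finset.mem_Icc]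
  lia

theorem disjoint_arcs {l v w r : ℕ} (hvw : v ≤ w) : Disjoint (arcs l v) (arcs w r) :=
  Finset.disjoint_left.mpr fun e he he' => by
    rw [mem_arcs] at he he'
    lia

theorem arcs_subset_arcs {l r l' r' : ℕ} (hl : l' ≤ l) (hr : r ≤ r') : arcs l r ⊆ arcs l' r' :=
  fun e he => by
    rw [mem_arcs] at he ⊢
    lia

/-- No two chords of a set of arcs cross. -/
def IsNoncrossing (A : Finset (ℕ × ℕ)) : Prop :=
  ∀ e ∈ A, ∀ f ∈ A, ¬(e.1 < f.1 ∧ f.1 < e.2 ∧ e.2 < f.2)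

theorem IsNoncrossing.mono {A B : Finset (ℕ × ℕ)} (hB : IsNoncrossing B) (hAB : A ⊆ B) :
    IsNoncrossing A :=
  fun e he f hf => hB e (hAB he) f (hAB hf)

theorem IsNoncrossing.union {A B : Finset (ℕ × ℕ)} (hA : IsNoncrossing A) (hB : IsNoncrossing B)
    {l v w r : ℕ} (hvw : v ≤ w) (hAv : A ⊆ arcs l v) (hBw : B ⊆ arcs w r) :
    IsNoncrossing (A ∪ B) := by
  intro e he f hf
  rcases Finset.mem_union.mp he with he | he <;> rcases Finset.mem_union.mp hf with hf | hf
  · exact hA e he f hf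
  · have he' := mem_arcs.mp (hAv he)
    have hf' := mem_arcs.mp (hBw hf)
    lia
  · have he' := mem_arcs.mp (hBw he)
    have hf' := mem_arcs.mp (hAv hf)
    lia
  · exact hB e he f hf

theorem IsNoncrossing.insert_root {A : Finset (ℕ × ℕ)} (hA : IsNoncrossing A) {l r : ℕ}
    (hAlr : A ⊆ arcs l r) : IsNoncrossing (insert (l, r) A) := by
  intro e he f hf
  rcases Finset.mem_insert.mp he with rfl | he <;> rcases Finset.mem_insert.mp hf with rfl | hf
  · simp
  · have hf' := mem_arcs.mp (hAlr hf)
    simp only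
    lia
  · have he' := mem_arcs.mp (hAlr he)
    simp only
    lia
  · exact hA e he f hf

/-- The set of vertices cut out by `p` is a union of components of the graph with edge set `A`. -/
def ConstantAlong (A : Finset (ℕ × ℕ)) (p : ℕ → Prop) : Prop := ∀ e ∈ A, (p e.1 ↔ p e.2)

theorem constantAlong_insert {A : Finset (ℕ × ℕ)} {p : ℕ → Prop} {l r : ℕ} :
    ConstantAlong (insert (l, r) A) p ↔ (p l ↔ p r) ∧ ConstantAlong A p :=
  Finset.forall_mem_insert (l, r) A _

/-- The vertices `l, …, r` lie in one component of the graph with edge set `A`, expressed through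
separating vertex sets instead of paths. -/
def Connects (A : Finset (ℕ × ℕ)) (l r : ℕ) : Prop :=
  ∀ p, ConstantAlong A p → ∀ a ∈ Set.Icc l r, ∀ b ∈ Set.Icc l r, (p a ↔ p b)

theorem Connects.image {A B : Finset (ℕ × ℕ)} {l r l' r' : ℕ} (h : Connects A l r) (f : ℕ → ℕ)
    (hf : Set.SurjOn f (Set.Icc l r) (Set.Icc l' r'))
    (hAB : ∀ e ∈ A, f e.1 = f e.2 ∨ (f e.1, f e.2) ∈ B) : Connects B l' r' := by
  intro p hp a' ha' b' hb'
  obtain ⟨a, ha, rfl⟩ := hf ha'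
  obtain ⟨b, hb, rfl⟩ := hf hb'
  refine h (p ∘ f) (fun e he => ?_) a ha b hb
  rcases hAB e he with heq | hmem
  · simp only [Function.comp_apply, heq]
  · exact hp _ hmem

theorem Connects.mono {A B : Finset (ℕ × ℕ)} {l r : ℕ} (h : Connects A l r) (hAB : A ⊆ B) :
    Connects B l r :=
  h.image id (Set.surjOn_id _) fun _ he => Or.inr (hAB he)

theorem Connects.trans {A : Finset (ℕ × ℕ)} {l v r : ℕ} (hlv : l ≤ v) (hvr : v ≤ r)
    (h₁ : Connects A l v) (h₂ : Connects A v r) : Connects A l r := by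
  intro p hp a ha b hb
  have hv (c : ℕ) (hc : c ∈ Set.Icc l r) : p c ↔ p v := by
    obtain hcv | hvc := le_total c v
    · exact h₁ p hp c ⟨hc.1, hcv⟩ v ⟨hlv, le_rfl⟩
    · exact h₂ p hp c ⟨hvc, hc.2⟩ v ⟨le_rfl, hvr⟩
  exact (hv a ha).trans (hv b hb).symm

theorem Connects.exists_arc_left {A : Finset (ℕ × ℕ)} {l r : ℕ} (h : Connects A l r) (hlr : l < r)
    (hA : A ⊆ arcs l r) : ∃ b, (l, b) ∈ A := by
  by_contra! hl
  have hp : ConstantAlong A (· = l) := fun e he => by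
    have he' := mem_arcs.mp (hA he)
    have hel : e.1 ≠ l := fun hel => hl e.2 (hel ▸ he)
    lia
  have := (h _ hp l ⟨le_rfl, hlr.le⟩ r ⟨hlr.le, le_rfl⟩).mp rfl
  lia

/-- Every arc of `A` lies in `(-∞, v]` or in `[w, ∞)`. With `w = v` no arc passes strictly over the
vertex `v`; with `w = v + 1` no arc covers the gap between `v` and `v + 1`. -/
def SplitsAt (A : Finset (ℕ × ℕ)) (v w : ℕ) : Prop := ∀ e ∈ A, e.2 ≤ v ∨ w ≤ e.1

theorem splitsAt_union {A B : Finset (ℕ × ℕ)} {l v w r : ℕ} (hA : A ⊆ arcs l v)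
    (hB : B ⊆ arcs w r) : SplitsAt (A ∪ B) v w := fun _ he =>
  (Finset.mem_union.mp he).imp (fun he => (mem_arcs.mp (hA he)).2.2)
    fun he => (mem_arcs.mp (hB he)).1

theorem SplitsAt.inter_arcs_union_inter_arcs {A : Finset (ℕ × ℕ)} {l v w r : ℕ}
    (h : SplitsAt A v w) (hA : A ⊆ arcs l r) : A ∩ arcs l v ∪ A ∩ arcs w r = A := by
  rw [← Finset.inter_union_distrib_left, Finset.inter_eq_left]
  intro e he
  have he' := mem_arcs.mp (hA he)
  have hvw := h e he
  rw [Finset.mem_union, mem_arcs, mem_arcs]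
  lia

theorem Connects.inter_arcs_left {A : Finset (ℕ × ℕ)} {l v r : ℕ} (h : Connects A l r)
    (hA : A ⊆ arcs l r) (hv : SplitsAt A v v) (hvr : v ≤ r) : Connects (A ∩ arcs l v) l v := by
  refine h.image (min · v) (fun a ha => ⟨a, ⟨ha.1, ha.2.trans hvr⟩, min_eq_left ha.2⟩)
    fun e he => ?_
  have he' := mem_arcs.mp (hA he)
  rcases hv e he with hev | hev
  · right
    simp only [min_eq_left hev, min_eq_left (he'.2.1.le.trans hev)]
    exact Finset.mem_inter.mpr ⟨he, mem_arcs.mpr ⟨he'.1, he'.2.1, hev⟩⟩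
  · left
    simp only [min_eq_right hev, min_eq_right (hev.trans he'.2.1.le)]

theorem Connects.inter_arcs_right {A : Finset (ℕ × ℕ)} {l v r : ℕ} (h : Connects A l r)
    (hA : A ⊆ arcs l r) (hv : SplitsAt A v v) (hlv : l ≤ v) : Connects (A ∩ arcs v r) v r := by
  refine h.image (max · v) (fun a ha => ⟨a, ⟨hlv.trans ha.1, ha.2⟩, max_eq_left ha.1⟩)
    fun e he => ?_
  have he' := mem_arcs.mp (hA he)
  rcases hv e he with hev | hev
  · left
    simp only [max_eq_right hev, max_eq_right (he'.2.1.le.trans hev)]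
  · right
    simp only [max_eq_left hev, max_eq_left (hev.trans he'.2.1.le)]
    exact Finset.mem_inter.mpr ⟨he, mem_arcs.mpr ⟨hev, he'.2.1, he'.2.2⟩⟩

theorem Connects.inter_arcs_left_of_insert {A : Finset (ℕ × ℕ)} {l i r : ℕ}
    (h : Connects (insert (l, r) A) l r) (hA : A ⊆ arcs l r) (hi : SplitsAt A i (i + 1))
    (hli : l ≤ i) (hir : i < r) : Connects (A ∩ arcs l i) l i := by
  refine h.image (fun a => if a ≤ i then a else l)
    (fun a ha => ⟨a, ⟨ha.1, ha.2.trans hir.le⟩, if_pos ha.2⟩) ?_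
  rw [Finset.forall_mem_insert]
  refine ⟨by simp [hli, hir.not_ge], fun e he => ?_⟩
  have he' := mem_arcs.mp (hA he)
  rcases hi e he with hei | hei
  · right
    simp only [if_pos hei, if_pos (he'.2.1.le.trans hei)]
    exact Finset.mem_inter.mpr ⟨he, mem_arcs.mpr ⟨he'.1, he'.2.1, hei⟩⟩
  · left
    simp only [if_neg (show ¬e.1 ≤ i by lia), if_neg (show ¬e.2 ≤ i by lia)]

theorem Connects.inter_arcs_right_of_insert {A : Finset (ℕ × ℕ)} {l i r : ℕ}
    (h : Connects (insert (l, r) A) l r) (hA : A ⊆ arcs l r) (hi : SplitsAt A i (i + 1))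
    (hli : l ≤ i) (hir : i < r) : Connects (A ∩ arcs (i + 1) r) (i + 1) r := by
  refine h.image (fun a => if i < a then a else r)
    (fun a ha => ⟨a, ⟨hli.trans (Nat.le_of_succ_le ha.1), ha.2⟩, if_pos ha.1⟩) ?_
  rw [Finset.forall_mem_insert]
  refine ⟨by simp [hli.not_gt, hir], fun e he => ?_⟩
  have he' := mem_arcs.mp (hA he)
  rcases hi e he with hei | hei
  · left
    simp only [if_neg (show ¬i < e.1 by lia), if_neg (show ¬i < e.2 by lia)]
  · right
    simp only [if_pos (show i < e.1 by lia), if_pos (show i < e.2 by lia)]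
    exact Finset.mem_inter.mpr ⟨he, mem_arcs.mpr ⟨hei, he'.2.1, he'.2.2⟩⟩

theorem IsNoncrossing.exists_arc_splitsAt {A : Finset (ℕ × ℕ)} (hA : IsNoncrossing A) {l r a b : ℕ}
    (hAlr : A ⊆ arcs l r) (ha : SplitsAt A a a) (hab : (a, b) ∈ A) :
    ∃ v, (a, v) ∈ A ∧ SplitsAt A v v := by
  obtain ⟨e, he, hmax⟩ := Finset.exists_max_image {e ∈ A | e.1 = a} Prod.snd
    ⟨(a, b), Finset.mem_filter.mpr ⟨hab, rfl⟩⟩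
  obtain ⟨heA, rfl⟩ := Finset.mem_filter.mp he
  refine ⟨e.2, heA, fun f hf => ?_⟩
  have he' := mem_arcs.mp (hAlr heA)
  by_contra! hcover
  rcases ha f hf with hfa | haf
  · lia
  · obtain heq | hlt := haf.eq_or_lt
    · exact hcover.1.not_ge (hmax f (Finset.mem_filter.mpr ⟨hf, heq.symm⟩))
    · exact hA e heA f hf ⟨hlt, hcover.2, hcover.1⟩

-- The longest arc from `a` to the right ends at a vertex that again no arc passes over; iterating
-- this leads to `r`.
theorem IsNoncrossing.iff_of_forall_not_splitsAt {A : Finset (ℕ × ℕ)} (hA : IsNoncrossing A)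
    {l r : ℕ} (hAlr : A ⊆ arcs l r) (hcover : ∀ i, l ≤ i → i < r → ¬SplitsAt A i (i + 1))
    {p : ℕ → Prop} (hp : ConstantAlong A p) {a : ℕ} (hla : l ≤ a) (har : a ≤ r)
    (ha : SplitsAt A a a) : p a ↔ p r := by
  induction hm : r - a using Nat.strong_induction_on generalizing a with
  | _ m ih =>
  obtain rfl | hlt := har.eq_or_lt
  · rfl
  obtain ⟨e, he, hea⟩ : ∃ e ∈ A, a < e.2 ∧ e.1 < a + 1 := by
    simpa only [SplitsAt, not_forall, not_or, not_le, exists_prop] using hcover a hla hlt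
  have hfst : e.1 = a := by
    have := ha e he
    lia
  obtain ⟨v, hav, hv⟩ := hA.exists_arc_splitsAt hAlr ha (hfst ▸ he : (a, e.2) ∈ A)
  have hav' := mem_arcs.mp (hAlr hav)
  simp only at hav'
  exact (hp _ hav).trans (ih (r - v) (by lia) (by lia) hav'.2.2 hv rfl)

end ArcSets

section Families

open Polynomial
open scoped FinsetFamily

open Classical in
/-- The noncrossing connected graphs on the vertices `l, …, r`, given by their edge sets. -/
noncomputable def connectedArcs (l r : ℕ) : Finset (Finset (ℕ × ℕ)) :=
  {A ∈ (arcs l r).powerset | IsNoncrossing A ∧ Connects A l r}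

/-- The noncrossing connected graphs on `l, …, r` that contain the root edge `(l, r)`. -/
noncomputable def rootedArcs (l r : ℕ) : Finset (Finset (ℕ × ℕ)) :=
  {A ∈ connectedArcs l r | (l, r) ∈ A}

open Classical in
/-- The noncrossing graphs on `l, …, r` with exactly two components, one containing `l` and the
other `r`: those that are disconnected but become connected when the root edge is added. -/
noncomputable def twoComponentArcs (l r : ℕ) : Finset (Finset (ℕ × ℕ)) :=
  {A ∈ (arcs l r).powerset |
    IsNoncrossing A ∧ ¬Connects A l r ∧ Connects (insert (l, r) A) l r}

theorem mem_connectedArcs {l r : ℕ} {A : Finset (ℕ × ℕ)} :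
    A ∈ connectedArcs l r ↔ A ⊆ arcs l r ∧ IsNoncrossing A ∧ Connects A l r := by
  classical rw [connectedArcs, Finset.mem_filter, Finset.mem_powerset]

theorem mem_rootedArcs {l r : ℕ} {A : Finset (ℕ × ℕ)} :
    A ∈ rootedArcs l r ↔ A ∈ connectedArcs l r ∧ (l, r) ∈ A :=
  Finset.mem_filter

theorem mem_twoComponentArcs {l r : ℕ} {A : Finset (ℕ × ℕ)} :
    A ∈ twoComponentArcs l r ↔ A ⊆ arcs l r ∧ IsNoncrossing A ∧ ¬Connects A l r ∧
      Connects (insert (l, r) A) l r := by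
  classical rw [twoComponentArcs, Finset.mem_filter, Finset.mem_powerset]

theorem connects_self (A : Finset (ℕ × ℕ)) (l : ℕ) : Connects A l l := fun p _ a ha b hb => by
  rw [le_antisymm ha.2 ha.1, le_antisymm hb.2 hb.1]

theorem connectedArcs_self (l : ℕ) : connectedArcs l l = {∅} := by
  ext A
  rw [mem_connectedArcs, Finset.mem_singleton]
  constructor
  · rintro ⟨hA, -⟩
    refine Finset.eq_empty_of_forall_notMem fun e he => ?_
    have he' := mem_arcs.mp (hA he)
    lia
  · rintro rfl
    exact ⟨Finset.empty_subset _, by simp [IsNoncrossing], connects_self ∅ l⟩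

theorem rootedArcs_self (l : ℕ) : rootedArcs l l = ∅ :=
  Finset.filter_false_of_mem fun _ hA hl =>
    (mem_arcs.mp ((mem_connectedArcs.mp hA).1 hl)).2.1.false

theorem disjoint_filter_notMem_twoComponentArcs (l r : ℕ) :
    Disjoint {A ∈ connectedArcs l r | (l, r) ∉ A} (twoComponentArcs l r) :=
  Finset.disjoint_left.mpr fun _ hA hA' => (mem_twoComponentArcs.mp hA').2.2.1
    (mem_connectedArcs.mp (Finset.mem_filter.mp hA).1).2.2

theorem root_notMem_of_mem_twoComponentArcs {l r : ℕ} {A : Finset (ℕ × ℕ)}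
    (hA : A ∈ twoComponentArcs l r) : (l, r) ∉ A := by
  obtain ⟨-, -, hnot, hins⟩ := mem_twoComponentArcs.mp hA
  exact fun hroot => hnot (Finset.insert_eq_of_mem hroot ▸ hins)

theorem rootedArcs_eq_image_insert {l r : ℕ} (hlr : l < r) :
    rootedArcs l r =
      ({A ∈ connectedArcs l r | (l, r) ∉ A} ∪ twoComponentArcs l r).image (insert (l, r)) := by
  have hroot : (l, r) ∈ arcs l r := mem_arcs.mpr ⟨le_rfl, hlr, le_rfl⟩
  ext A
  simp only [Finset.mem_image, Finset.mem_union, Finset.mem_filter, mem_rootedArcs,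
    mem_connectedArcs, mem_twoComponentArcs]
  constructor
  · rintro ⟨⟨hA, hnc, hconn⟩, hmem⟩
    have hsub : A.erase (l, r) ⊆ A := Finset.erase_subset _ _
    refine ⟨A.erase (l, r), ?_, Finset.insert_erase hmem⟩
    by_cases herase : Connects (A.erase (l, r)) l r
    · exact Or.inl ⟨⟨hsub.trans hA, hnc.mono hsub, herase⟩, Finset.notMem_erase _ _⟩
    · exact Or.inr ⟨hsub.trans hA, hnc.mono hsub, herase, by rwa [Finset.insert_erase hmem]⟩
  · rintro ⟨B, ⟨⟨hB, hnc, hconn⟩, -⟩ | ⟨hB, hnc, -, hconn⟩, rfl⟩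
    · exact ⟨⟨Finset.insert_subset hroot hB, hnc.insert_root hB,
        hconn.mono (Finset.subset_insert _ _)⟩, Finset.mem_insert_self _ _⟩
    · exact ⟨⟨Finset.insert_subset hroot hB, hnc.insert_root hB, hconn⟩,
        Finset.mem_insert_self _ _⟩

theorem one_add_X_mul_edgeGenPoly_rootedArcs {l r : ℕ} (hlr : l < r) :
    (1 + X) * edgeGenPoly (rootedArcs l r) =
      X * (edgeGenPoly (connectedArcs l r) + edgeGenPoly (twoComponentArcs l r)) := by
  have hsplit : edgeGenPoly (rootedArcs l r) +
      edgeGenPoly {A ∈ connectedArcs l r | (l, r) ∉ A} = edgeGenPoly (connectedArcs l r) :=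
    Finset.sum_filter_add_sum_filter_not _ _ _
  have hdelete : edgeGenPoly (rootedArcs l r) =
      X * (edgeGenPoly {A ∈ connectedArcs l r | (l, r) ∉ A} +
        edgeGenPoly (twoComponentArcs l r)) := by
    rw [rootedArcs_eq_image_insert hlr, edgeGenPoly_image_insert, edgeGenPoly,
      Finset.sum_union (disjoint_filter_notMem_twoComponentArcs l r)]
    · rfl
    · intro A hA
      rcases Finset.mem_union.mp hA with hA | hA
      · exact (Finset.mem_filter.mp hA).2
      · exact root_notMem_of_mem_twoComponentArcs hA
  linear_combination hdelete + X * hsplit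

theorem subset_arcs_of_mem_rootedArcs {l r : ℕ} {A : Finset (ℕ × ℕ)} (hA : A ∈ rootedArcs l r) :
    A ⊆ arcs l r :=
  (mem_connectedArcs.mp (mem_rootedArcs.mp hA).1).1

theorem subset_arcs_of_mem_connectedArcs {l r : ℕ} {A : Finset (ℕ × ℕ)}
    (hA : A ∈ connectedArcs l r) : A ⊆ arcs l r :=
  (mem_connectedArcs.mp hA).1

theorem mem_rootedArcs_sups_connectedArcs {l v r : ℕ} (hlv : l ≤ v) (hvr : v ≤ r)
    {A : Finset (ℕ × ℕ)} :
    A ∈ rootedArcs l v ⊻ connectedArcs v r ↔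
      A ∈ connectedArcs l r ∧ (l, v) ∈ A ∧ SplitsAt A v v := by
  rw [Finset.mem_sups]
  constructor
  · rintro ⟨B, hB, D, hD, rfl⟩
    rw [mem_rootedArcs, mem_connectedArcs] at hB
    rw [mem_connectedArcs] at hD
    obtain ⟨⟨hBsub, hBnc, hBconn⟩, hroot⟩ := hB
    obtain ⟨hDsub, hDnc, hDconn⟩ := hD
    refine ⟨mem_connectedArcs.mpr ⟨?_, hBnc.union hDnc le_rfl hBsub hDsub, ?_⟩,
      Finset.mem_union_left _ hroot, splitsAt_union hBsub hDsub⟩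
    · exact Finset.union_subset (hBsub.trans (arcs_subset_arcs le_rfl hvr))
        (hDsub.trans (arcs_subset_arcs hlv le_rfl))
    · exact (hBconn.mono Finset.subset_union_left).trans hlv hvr
        (hDconn.mono Finset.subset_union_right)
  · rintro ⟨hA, hroot, hsplit⟩
    obtain ⟨hsub, hnc, hconn⟩ := mem_connectedArcs.mp hA
    refine ⟨A ∩ arcs l v, ?_, A ∩ arcs v r, ?_, hsplit.inter_arcs_union_inter_arcs hsub⟩
    · rw [mem_rootedArcs, mem_connectedArcs, Finset.mem_inter, mem_arcs]
      exact ⟨⟨Finset.inter_subset_right, hnc.mono Finset.inter_subset_left,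
        hconn.inter_arcs_left hsub hsplit hvr⟩, hroot, le_rfl, (mem_arcs.mp (hsub hroot)).2.1,
        le_rfl⟩
    · exact mem_connectedArcs.mpr ⟨Finset.inter_subset_right, hnc.mono Finset.inter_subset_left,
        hconn.inter_arcs_right hsub hsplit hlv⟩

-- The summand `v` consists of the graphs in which `v` is the greatest neighbour of `l`.
theorem connectedArcs_eq_biUnion {l r : ℕ} (hlr : l < r) :
    connectedArcs l r =
      (Finset.Icc l r).biUnion fun v => rootedArcs l v ⊻ connectedArcs v r := by
  ext A
  simp only [Finset.mem_biUnion, Finset.mem_Icc]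
  constructor
  · intro hA
    obtain ⟨hsub, hnc, hconn⟩ := mem_connectedArcs.mp hA
    obtain ⟨b, hb⟩ := hconn.exists_arc_left hlr hsub
    obtain ⟨v, hv, hsplit⟩ := hnc.exists_arc_splitsAt hsub
      (fun e he => Or.inr (mem_arcs.mp (hsub he)).1) hb
    have hv' := mem_arcs.mp (hsub hv)
    exact ⟨v, ⟨hv'.2.1.le, hv'.2.2⟩,
      (mem_rootedArcs_sups_connectedArcs hv'.2.1.le hv'.2.2).mpr ⟨hA, hv, hsplit⟩⟩
  · rintro ⟨v, ⟨hlv, hvr⟩, hA⟩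
    exact ((mem_rootedArcs_sups_connectedArcs hlv hvr).mp hA).1

theorem pairwiseDisjoint_rootedArcs_sups_connectedArcs (l r : ℕ) :
    (Finset.Icc l r : Set ℕ).PairwiseDisjoint fun v => rootedArcs l v ⊻ connectedArcs v r := by
  intro v hv w hw hne
  rw [Finset.coe_Icc] at hv hw
  refine Finset.disjoint_left.mpr fun A hAv hAw => ?_
  obtain ⟨hA, hlv, hsplit_v⟩ := (mem_rootedArcs_sups_connectedArcs hv.1 hv.2).mp hAv
  obtain ⟨-, hlw, hsplit_w⟩ := (mem_rootedArcs_sups_connectedArcs hw.1 hw.2).mp hAw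
  have hv' := mem_arcs.mp (subset_arcs_of_mem_connectedArcs hA hlv)
  have hw' := mem_arcs.mp (subset_arcs_of_mem_connectedArcs hA hlw)
  have hwv := hsplit_v _ hlw
  have hvw := hsplit_w _ hlv
  lia

theorem edgeGenPoly_connectedArcs {l r : ℕ} (hlr : l < r) :
    edgeGenPoly (connectedArcs l r) =
      ∑ v ∈ Finset.Icc l r, edgeGenPoly (rootedArcs l v) * edgeGenPoly (connectedArcs v r) := by
  rw [connectedArcs_eq_biUnion hlr, edgeGenPoly,
    Finset.sum_biUnion (pairwiseDisjoint_rootedArcs_sups_connectedArcs l r)]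
  exact Finset.sum_congr rfl fun v _ => edgeGenPoly_sups (disjoint_arcs le_rfl)
    (fun _ => subset_arcs_of_mem_rootedArcs) fun _ => subset_arcs_of_mem_connectedArcs

theorem connects_insert_union {A B : Finset (ℕ × ℕ)} {l i r : ℕ} (hli : l ≤ i) (hir : i < r)
    (hA : Connects A l i) (hB : Connects B (i + 1) r) :
    Connects (insert (l, r) (A ∪ B)) l r := by
  intro p hp
  rw [constantAlong_insert] at hp
  have hl (c : ℕ) (hc : c ∈ Set.Icc l r) : p c ↔ p l := by
    obtain hci | hic := Nat.lt_or_ge i c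
    · exact (hB p (fun e he => hp.2 e (Finset.mem_union_right _ he)) c ⟨hci, hc.2⟩ r
        ⟨hir, le_rfl⟩).trans hp.1.symm
    · exact hA p (fun e he => hp.2 e (Finset.mem_union_left _ he)) c ⟨hc.1, hic⟩ l ⟨le_rfl, hli⟩
  exact fun a ha b hb => (hl a ha).trans (hl b hb).symm

theorem SplitsAt.constantAlong_le {A : Finset (ℕ × ℕ)} {l i r : ℕ} (h : SplitsAt A i (i + 1))
    (hA : A ⊆ arcs l r) : ConstantAlong A (· ≤ i) := fun e he => by
  have he' := mem_arcs.mp (hA he)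
  have hi := h e he
  lia

theorem mem_connectedArcs_sups_connectedArcs {l i r : ℕ} (hli : l ≤ i) (hir : i < r)
    {A : Finset (ℕ × ℕ)} :
    A ∈ connectedArcs l i ⊻ connectedArcs (i + 1) r ↔
      A ∈ twoComponentArcs l r ∧ SplitsAt A i (i + 1) := by
  rw [Finset.mem_sups]
  constructor
  · rintro ⟨B, hB, D, hD, rfl⟩
    obtain ⟨hBsub, hBnc, hBconn⟩ := mem_connectedArcs.mp hB
    obtain ⟨hDsub, hDnc, hDconn⟩ := mem_connectedArcs.mp hD
    have hsub : B ∪ D ⊆ arcs l r :=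
      Finset.union_subset (hBsub.trans (arcs_subset_arcs le_rfl hir.le))
        (hDsub.trans (arcs_subset_arcs (hli.trans i.le_succ) le_rfl))
    have hsplit : SplitsAt (B ∪ D) i (i + 1) := splitsAt_union hBsub hDsub
    refine ⟨mem_twoComponentArcs.mpr ⟨hsub, hBnc.union hDnc i.le_succ hBsub hDsub, ?_,
      connects_insert_union hli hir hBconn hDconn⟩, hsplit⟩
    exact fun hconn => hir.not_ge ((hconn _ (hsplit.constantAlong_le hsub) l
      ⟨le_rfl, hli.trans hir.le⟩ r ⟨hli.trans hir.le, le_rfl⟩).mp hli)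
  · rintro ⟨hA, hsplit⟩
    obtain ⟨hsub, hnc, -, hconn⟩ := mem_twoComponentArcs.mp hA
    exact ⟨A ∩ arcs l i, mem_connectedArcs.mpr ⟨Finset.inter_subset_right,
        hnc.mono Finset.inter_subset_left, hconn.inter_arcs_left_of_insert hsub hsplit hli hir⟩,
      A ∩ arcs (i + 1) r, mem_connectedArcs.mpr ⟨Finset.inter_subset_right,
        hnc.mono Finset.inter_subset_left, hconn.inter_arcs_right_of_insert hsub hsplit hli hir⟩,
      hsplit.inter_arcs_union_inter_arcs hsub⟩

theorem exists_splitsAt_succ_of_mem_twoComponentArcs {l r : ℕ} (hlr : l ≤ r)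
    {A : Finset (ℕ × ℕ)} (hA : A ∈ twoComponentArcs l r) :
    ∃ i, l ≤ i ∧ i < r ∧ SplitsAt A i (i + 1) := by
  obtain ⟨hsub, hnc, hnot, hconn⟩ := mem_twoComponentArcs.mp hA
  by_contra! hcover
  refine hnot fun p hp => hconn p (constantAlong_insert.mpr ⟨?_, hp⟩)
  exact hnc.iff_of_forall_not_splitsAt hsub hcover hp le_rfl hlr
    fun e he => Or.inr (mem_arcs.mp (hsub he)).1

theorem twoComponentArcs_eq_biUnion {l r : ℕ} (hlr : l ≤ r) :
    twoComponentArcs l r =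
      (Finset.Ico l r).biUnion fun i => connectedArcs l i ⊻ connectedArcs (i + 1) r := by
  ext A
  simp only [Finset.mem_biUnion, Finset.mem_Ico]
  constructor
  · intro hA
    obtain ⟨i, hli, hir, hsplit⟩ := exists_splitsAt_succ_of_mem_twoComponentArcs hlr hA
    exact ⟨i, ⟨hli, hir⟩, (mem_connectedArcs_sups_connectedArcs hli hir).mpr ⟨hA, hsplit⟩⟩
  · rintro ⟨i, ⟨hli, hir⟩, hA⟩
    exact ((mem_connectedArcs_sups_connectedArcs hli hir).mp hA).1

theorem eq_of_splitsAt_succ_of_mem_twoComponentArcs {l r i j : ℕ} {A : Finset (ℕ × ℕ)}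
    (hA : A ∈ twoComponentArcs l r) (hi : i ∈ Set.Ico l r) (hj : j ∈ Set.Ico l r)
    (hsplit_i : SplitsAt A i (i + 1)) (hsplit_j : SplitsAt A j (j + 1)) : i = j := by
  wlog hij : i ≤ j generalizing i j
  · exact (this hj hi hsplit_j hsplit_i (le_of_not_ge hij)).symm
  obtain ⟨hsub, -, -, hconn⟩ := mem_twoComponentArcs.mp hA
  have hp : ConstantAlong (insert (l, r) A) fun a => i < a ∧ a ≤ j := by
    refine constantAlong_insert.mpr ⟨?_, fun e he => ?_⟩
    · have hil := hi.1
      have hjr := hj.2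
      lia
    · have hei := hsplit_i.constantAlong_le hsub e he
      have hej := hsplit_j.constantAlong_le hsub e he
      lia
  have hlj := hconn _ hp l ⟨le_rfl, hi.1.trans hi.2.le⟩ j ⟨hj.1, hj.2.le⟩
  have hil := hi.1
  lia

theorem edgeGenPoly_twoComponentArcs {l r : ℕ} (hlr : l ≤ r) :
    edgeGenPoly (twoComponentArcs l r) =
      ∑ i ∈ Finset.Ico l r,
        edgeGenPoly (connectedArcs l i) * edgeGenPoly (connectedArcs (i + 1) r) := by
  have hdisj : (Finset.Ico l r : Set ℕ).PairwiseDisjoint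
      fun i => connectedArcs l i ⊻ connectedArcs (i + 1) r := by
    intro i hi j hj hne
    rw [Finset.coe_Ico] at hi hj
    refine Finset.disjoint_left.mpr fun A hAi hAj => hne ?_
    obtain ⟨hA, hsplit_i⟩ := (mem_connectedArcs_sups_connectedArcs hi.1 hi.2).mp hAi
    obtain ⟨-, hsplit_j⟩ := (mem_connectedArcs_sups_connectedArcs hj.1 hj.2).mp hAj
    exact eq_of_splitsAt_succ_of_mem_twoComponentArcs hA hi hj hsplit_i hsplit_j
  rw [twoComponentArcs_eq_biUnion hlr, edgeGenPoly, Finset.sum_biUnion hdisj]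
  exact Finset.sum_congr rfl fun i _ => edgeGenPoly_sups (disjoint_arcs i.le_succ)
    (fun _ => subset_arcs_of_mem_connectedArcs) fun _ => subset_arcs_of_mem_connectedArcs

/-- Translation of arcs by `t`. -/
def translateArc (t : ℕ) : ℕ × ℕ ↪ ℕ × ℕ := (addRightEmbedding t).prodMap (addRightEmbedding t)

theorem translateArc_apply (t : ℕ) (e : ℕ × ℕ) : translateArc t e = (e.1 + t, e.2 + t) := rfl

theorem arcs_add (l r t : ℕ) : arcs (l + t) (r + t) = (arcs l r).map (translateArc t) := by
  ext e
  simp only [Finset.mem_map, mem_arcs, translateArc_apply, Prod.ext_iff]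
  constructor
  · rintro ⟨hl, he, hr⟩
    exact ⟨(e.1 - t, e.2 - t), by lia, by lia, by lia⟩
  · rintro ⟨e', he', h₁, h₂⟩
    lia

theorem isNoncrossing_map_translateArc {A : Finset (ℕ × ℕ)} {t : ℕ} :
    IsNoncrossing (A.map (translateArc t)) ↔ IsNoncrossing A := by
  simp only [IsNoncrossing, Finset.forall_mem_map, translateArc_apply, add_lt_add_iff_right]

theorem connects_map_translateArc {A : Finset (ℕ × ℕ)} {l r t : ℕ} :
    Connects (A.map (translateArc t)) (l + t) (r + t) ↔ Connects A l r := by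
  constructor
  · intro h
    refine h.image (· - t) (fun a ha => ⟨a + t, ⟨?_, ?_⟩, Nat.add_sub_cancel a t⟩) ?_
    · exact Nat.add_le_add_right ha.1 t
    · exact Nat.add_le_add_right ha.2 t
    · simp only [Finset.forall_mem_map, translateArc_apply, Nat.add_sub_cancel]
      exact fun e he => Or.inr he
  · intro h
    refine h.image (· + t) (fun a ha => ⟨a - t, ⟨?_, ?_⟩, ?_⟩)
      fun e he => Or.inr (Finset.mem_map_of_mem _ he)
    · exact Nat.le_sub_of_add_le ha.1
    · exact Nat.sub_le_of_le_add ha.2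
    · exact Nat.sub_add_cancel ((Nat.le_add_left t l).trans ha.1)

theorem edgeGenPoly_connectedArcs_add (l r t : ℕ) :
    edgeGenPoly (connectedArcs (l + t) (r + t)) = edgeGenPoly (connectedArcs l r) := by
  refine edgeGenPoly_eq_of_map_mem_iff (translateArc t) (fun B hB => ?_) fun A => ?_
  · have hsub := subset_arcs_of_mem_connectedArcs hB
    rw [arcs_add, Finset.subset_map_iff] at hsub
    obtain ⟨A, -, rfl⟩ := hsub
    exact ⟨A, rfl⟩
  · rw [mem_connectedArcs, mem_connectedArcs, arcs_add, Finset.map_subset_map,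
      isNoncrossing_map_translateArc, connects_map_translateArc]

theorem edgeGenPoly_connectedArcs_eq_zero_sub {l r : ℕ} (hlr : l ≤ r) :
    edgeGenPoly (connectedArcs l r) = edgeGenPoly (connectedArcs 0 (r - l)) := by
  simpa only [zero_add, Nat.sub_add_cancel hlr] using edgeGenPoly_connectedArcs_add 0 (r - l) l

end Families

section GeneratingSeries

open PowerSeries

/-- The generating series of noncrossing connected graphs on `m + 1` vertices, with `X` marking
`m` and the polynomial variable marking edges. -/
noncomputable def connectedSeries : (Polynomial ℤ)⟦X⟧ := mk fun m => edgeGenPoly (connectedArcs 0 m)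

/-- The generating series of noncrossing connected graphs on `m + 1` vertices that contain the root
edge, with `X` marking `m` and the polynomial variable marking edges. -/
noncomputable def rootedSeries : (Polynomial ℤ)⟦X⟧ := mk fun m => edgeGenPoly (rootedArcs 0 m)

/-- The generating series of noncrossing graphs on `m + 1` vertices with two components, one for
each end of the root edge, with `X` marking `m` and the polynomial variable marking edges. -/
noncomputable def twoComponentSeries : (Polynomial ℤ)⟦X⟧ :=
  mk fun m => edgeGenPoly (twoComponentArcs 0 m)

theorem edgeGenPoly_connectedArcs_self (l : ℕ) : edgeGenPoly (connectedArcs l l) = 1 := by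
  simp [edgeGenPoly, connectedArcs_self]

theorem edgeGenPoly_rootedArcs_self (l : ℕ) : edgeGenPoly (rootedArcs l l) = 0 := by
  simp [edgeGenPoly, rootedArcs_self]

theorem edgeGenPoly_twoComponentArcs_self (l : ℕ) : edgeGenPoly (twoComponentArcs l l) = 0 := by
  rw [edgeGenPoly_twoComponentArcs le_rfl, Finset.Ico_self, Finset.sum_empty]

theorem connectedSeries_eq_one_add : connectedSeries = 1 + rootedSeries * connectedSeries := by
  ext1 m
  rw [map_add, coeff_one, coeff_mul]
  simp only [connectedSeries, rootedSeries, coeff_mk]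
  obtain rfl | hm := m.eq_zero_or_pos
  · simp [edgeGenPoly_connectedArcs_self, edgeGenPoly_rootedArcs_self]
  · rw [if_neg hm.ne', zero_add, edgeGenPoly_connectedArcs hm, ← Nat.range_succ_eq_Icc_zero,
      Finset.Nat.sum_antidiagonal_eq_sum_range_succ fun i j =>
        edgeGenPoly (rootedArcs 0 i) * edgeGenPoly (connectedArcs 0 j)]
    refine Finset.sum_congr rfl fun v hv => ?_
    rw [edgeGenPoly_connectedArcs_eq_zero_sub (Finset.mem_range_succ_iff.mp hv)]

theorem twoComponentSeries_eq_X_mul : twoComponentSeries = X * connectedSeries ^ 2 := by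
  ext1 m
  obtain - | m := m
  · simp [twoComponentSeries, edgeGenPoly_twoComponentArcs_self]
  · rw [coeff_succ_X_mul, sq, coeff_mul]
    simp only [connectedSeries, twoComponentSeries, coeff_mk]
    rw [edgeGenPoly_twoComponentArcs m.succ.zero_le, ← Finset.range_eq_Ico,
      Finset.Nat.sum_antidiagonal_eq_sum_range_succ fun i j =>
        edgeGenPoly (connectedArcs 0 i) * edgeGenPoly (connectedArcs 0 j)]
    refine Finset.sum_congr rfl fun i hi => ?_
    rw [edgeGenPoly_connectedArcs_eq_zero_sub (Finset.mem_range.mp hi), Nat.succ_sub_succ]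

theorem one_add_X_mul_rootedSeries :
    (1 + C (Polynomial.X : Polynomial ℤ)) * rootedSeries =
      C Polynomial.X * (connectedSeries - 1 + twoComponentSeries) := by
  ext1 m
  rw [← map_one C, ← map_add, coeff_C_mul, coeff_C_mul, map_add, map_sub, coeff_C]
  simp only [connectedSeries, rootedSeries, twoComponentSeries, coeff_mk]
  obtain rfl | hm := m.eq_zero_or_pos
  · simp [edgeGenPoly_connectedArcs_self, edgeGenPoly_rootedArcs_self,
      edgeGenPoly_twoComponentArcs_self]
  · rw [if_neg hm.ne', sub_zero, one_add_X_mul_edgeGenPoly_rootedArcs hm]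

theorem constantCoeff_connectedSeries_sub_one : constantCoeff (connectedSeries - 1) = 0 := by
  rw [map_sub, map_one, ← coeff_zero_eq_constantCoeff_apply, connectedSeries, coeff_mk,
    edgeGenPoly_connectedArcs_self, sub_self]

theorem connectedSeries_sub_one_cubic :
    (connectedSeries - 1) * (1 - C Polynomial.X * (connectedSeries - 1)) =
      C Polynomial.X * X * (1 + (connectedSeries - 1)) ^ 3 := by
  linear_combination (1 + C Polynomial.X) * connectedSeries_eq_one_add +
    connectedSeries * one_add_X_mul_rootedSeries +
    C Polynomial.X * connectedSeries * twoComponentSeries_eq_X_mul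

theorem succ_mul_coeff_coeff_connectedSeries_pow (s d k : ℕ) :
    ((d : ℤ) + 1) * (coeff (d + 1) (connectedSeries ^ (s + 1))).coeff (k + 1) =
      (s + 1) * ((3 * (d + 1) + s).choose (d + s + k + 3) * k.choose d) := by
  have hlagrange := succ_mul_coeff_one_add_pow_of_mul_one_sub_eq (Polynomial.X : Polynomial ℤ)
    constantCoeff_connectedSeries_sub_one connectedSeries_sub_one_cubic s d
  have hcoeff := congrArg (Polynomial.coeff · (k + 1)) hlagrange
  have hextract := coeff_X_pow_mul_sum_choose (d + s + 3) d k
  rw [show 2 * d + (d + s + 3) = 3 * (d + 1) + s by ring,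
    show d + s + 3 + k = d + s + k + 3 by ring] at hextract
  simpa only [add_sub_cancel, ← Nat.cast_succ, Polynomial.coeff_natCast_mul, hextract] using hcoeff

theorem sub_one_mul_coeff_connectedSeries {n k : ℕ} (hn : 2 ≤ n) (hk : 1 ≤ k) :
    ((n - 1 : ℕ) : ℤ) * (coeff (n - 1) connectedSeries).coeff k =
      (3 * n - 3).choose (n + k) * (k - 1).choose (n - 2) := by
  obtain ⟨d, rfl⟩ := Nat.exists_eq_add_of_le' hn
  obtain ⟨j, rfl⟩ := Nat.exists_eq_add_of_le' hk
  have h := succ_mul_coeff_coeff_connectedSeries_pow 0 d j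
  rw [show 3 * (d + 1) + 0 = 3 * (d + 2) - 3 by lia,
    show d + 0 + j + 3 = d + 2 + (j + 1) by lia] at h
  simpa using h

theorem sub_two_mul_coeff_connectedSeries_sq {n k : ℕ} (hn : 3 ≤ n) (hk : 1 ≤ k) :
    ((n - 2 : ℕ) : ℤ) * (coeff (n - 2) (connectedSeries ^ 2)).coeff k =
      2 * ((3 * n - 5).choose (n + k) * (k - 1).choose (n - 3)) := by
  obtain ⟨d, rfl⟩ := Nat.exists_eq_add_of_le' hn
  obtain ⟨j, rfl⟩ := Nat.exists_eq_add_of_le' hk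
  have h := succ_mul_coeff_coeff_connectedSeries_pow 1 d j
  rw [show 3 * (d + 1) + 1 = 3 * (d + 3) - 5 by lia,
    show d + 1 + j + 3 = d + 3 + (j + 1) by lia, one_add_one_eq_two, Nat.cast_one,
    one_add_one_eq_two] at h
  simpa using h

theorem coeff_rootedArcs_add_coeff_rootedArcs (m k : ℕ) :
    (edgeGenPoly (rootedArcs 0 (m + 1))).coeff k +
        (edgeGenPoly (rootedArcs 0 (m + 1))).coeff (k + 1) =
      (coeff (m + 1) connectedSeries).coeff k + (coeff m (connectedSeries ^ 2)).coeff k := by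
  have h := congrArg (fun P => (coeff (m + 1) P).coeff (k + 1)) one_add_X_mul_rootedSeries
  rw [twoComponentSeries_eq_X_mul] at h
  simp only [add_mul, one_mul, map_add, map_sub, coeff_C_mul, coeff_succ_X_mul, coeff_one,
    m.succ_ne_zero, if_false, sub_zero, Polynomial.coeff_add, Polynomial.coeff_X_mul] at h
  rw [add_comm]
  simpa only [rootedSeries, coeff_mk] using h

end GeneratingSeries

section Transfer

/-- A chord of the vertices of `Fin n` as an arc, its endpoints being listed in increasing order. -/
def endpoints (n : ℕ) : Sym2 (Fin n) ↪ ℕ × ℕ where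
  toFun e := (e.inf, e.sup)
  inj' e f hef := by
    rw [Prod.mk.injEq, Fin.val_inj, Fin.val_inj] at hef
    exact Sym2.inf_eq_inf_and_sup_eq_sup.mp hef

variable {n : ℕ}

theorem endpoints_mk {a b : Fin n} (hab : a ≤ b) : endpoints n s(a, b) = (a.val, b.val) := by
  change (((s(a, b) : Sym2 (Fin n)).inf : ℕ), ((s(a, b) : Sym2 (Fin n)).sup : ℕ)) = _
  rw [Sym2.inf_mk, Sym2.sup_mk, min_eq_left hab, max_eq_right hab]

theorem exists_le_mk_eq (e : Sym2 (Fin n)) : ∃ a b : Fin n, a ≤ b ∧ s(a, b) = e := by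
  induction e with
  | _ a b =>
    obtain hab | hba := le_total a b
    · exact ⟨a, b, hab, rfl⟩
    · exact ⟨b, a, hba, Sym2.eq_swap⟩

theorem mk_mem_map_endpoints {E : Finset (Sym2 (Fin n))} {a b : Fin n} (hab : a ≤ b) :
    (a.val, b.val) ∈ E.map (endpoints n) ↔ s(a, b) ∈ E := by
  rw [← endpoints_mk hab, Finset.mem_map']

theorem crosses_iff {e f : Sym2 (Fin n)} :
    Crosses e f ↔ (endpoints n e).1 < (endpoints n f).1 ∧ (endpoints n f).1 < (endpoints n e).2 ∧
      (endpoints n e).2 < (endpoints n f).2 := by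
  constructor
  · rintro ⟨a, b, c, d, rfl, rfl, hac, hcb, hbd⟩
    rw [endpoints_mk (hac.trans hcb).le, endpoints_mk (hcb.trans hbd).le]
    exact ⟨hac, hcb, hbd⟩
  · obtain ⟨a, b, hab, rfl⟩ := exists_le_mk_eq e
    obtain ⟨c, d, hcd, rfl⟩ := exists_le_mk_eq f
    rw [endpoints_mk hab, endpoints_mk hcd]
    rintro ⟨hac, hcb, hbd⟩
    exact ⟨a, b, c, d, rfl, rfl, hac, hcb, hbd⟩

theorem isNoncrossing_map_endpoints {E : Finset (Sym2 (Fin n))} :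
    IsNoncrossing (E.map (endpoints n)) ↔ ∀ e ∈ E, ∀ f ∈ E, ¬Crosses e f := by
  simp only [IsNoncrossing, Finset.forall_mem_map, crosses_iff]

theorem endpoints_mem_arcs {m : ℕ} {e : Sym2 (Fin (m + 1))} :
    endpoints (m + 1) e ∈ arcs 0 m ↔ ¬e.IsDiag := by
  obtain ⟨a, b, hab, rfl⟩ := exists_le_mk_eq e
  rw [endpoints_mk hab, mem_arcs, Sym2.mk_isDiag_iff]
  lia

theorem exists_map_endpoints_eq {m : ℕ} {B : Finset (ℕ × ℕ)} (hB : B ⊆ arcs 0 m) :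
    ∃ E : Finset (Sym2 (Fin (m + 1))), E.map (endpoints (m + 1)) = B := by
  have harcs : arcs 0 m ⊆ Finset.univ.map (endpoints (m + 1)) := by
    rintro ⟨a, b⟩ hab
    obtain ⟨-, hlt, hbm⟩ := mem_arcs.mp hab
    exact (mk_mem_map_endpoints (a := ⟨a, by lia⟩) (b := ⟨b, by lia⟩) hlt.le).mpr
      (Finset.mem_univ _)
  obtain ⟨E, -, hE⟩ := Finset.subset_map_iff.mp (hB.trans harcs)
  exact ⟨E, hE.symm⟩

theorem ConstantAlong.iff_of_adj {E : Finset (Sym2 (Fin n))} {p : ℕ → Prop}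
    (hp : ConstantAlong (E.map (endpoints n)) p) {a b : Fin n} (hab : (graphOf E).Adj a b) :
    p a ↔ p b := by
  wlog hle : a ≤ b generalizing a b
  · exact (this hab.symm (le_of_not_ge hle)).symm
  exact hp _ ((mk_mem_map_endpoints hle).mpr ((SimpleGraph.fromEdgeSet_adj _).mp hab).1)

theorem ConstantAlong.iff_of_reachable {E : Finset (Sym2 (Fin n))} {p : ℕ → Prop}
    (hp : ConstantAlong (E.map (endpoints n)) p) {a b : Fin n} (hab : (graphOf E).Reachable a b) :
    p a ↔ p b := by
  obtain ⟨walk⟩ := hab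
  induction walk with
  | nil => rfl
  | cons hadj _ ih => exact (hp.iff_of_adj hadj).trans ih

theorem constantAlong_reachable (E : Finset (Sym2 (Fin n))) (a : Fin n) :
    ConstantAlong (E.map (endpoints n))
      fun c => ∃ b : Fin n, b = c ∧ (graphOf E).Reachable a b := by
  simp only [ConstantAlong, Finset.forall_mem_map]
  intro e he
  obtain ⟨b, c, hbc, rfl⟩ := exists_le_mk_eq e
  simp only [endpoints_mk hbc, Fin.val_inj, exists_eq_left]
  obtain rfl | hne := eq_or_ne b c
  · rfl
  · have hadj : (graphOf E).Adj b c := (SimpleGraph.fromEdgeSet_adj _).mpr ⟨he, hne⟩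
    exact ⟨fun h => h.trans hadj.reachable, fun h => h.trans hadj.symm.reachable⟩

theorem connected_graphOf_iff {m : ℕ} {E : Finset (Sym2 (Fin (m + 1)))} :
    (graphOf E).Connected ↔ Connects (E.map (endpoints (m + 1))) 0 m := by
  constructor
  · intro h p hp a ha b hb
    exact hp.iff_of_reachable
      (h.preconnected ⟨a, Nat.lt_succ_of_le ha.2⟩ ⟨b, Nat.lt_succ_of_le hb.2⟩)
  · intro h
    refine SimpleGraph.connected_iff_exists_forall_reachable _ |>.mpr ⟨0, fun a => ?_⟩
    obtain ⟨b, hba, hreach⟩ := (h _ (constantAlong_reachable E 0) 0 ⟨le_rfl, m.zero_le⟩ a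
      ⟨a.val.zero_le, Nat.le_of_lt_succ a.isLt⟩).mp ⟨0, rfl, .rfl⟩
    exact Fin.ext hba ▸ hreach

theorem hasEdge1n_iff {m : ℕ} {E : Finset (Sym2 (Fin (m + 1)))} :
    HasEdge1n E ↔ (0, m) ∈ E.map (endpoints (m + 1)) := by
  have hlast := mk_mem_map_endpoints (E := E) (Fin.zero_le (Fin.last m))
  rw [Fin.val_zero, Fin.val_last] at hlast
  rw [hlast]
  constructor
  · rintro ⟨a, b, ha, hb, hab⟩
    rwa [show a = 0 from Fin.ext ha, show b = Fin.last m from Fin.ext hb] at hab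
  · exact fun h => ⟨0, Fin.last m, rfl, rfl, h⟩

theorem map_endpoints_mem_rootedArcs {m : ℕ} {E : Finset (Sym2 (Fin (m + 1)))} :
    E.map (endpoints (m + 1)) ∈ rootedArcs 0 m ↔ IsNCC E ∧ HasEdge1n E := by
  have hsub : E.map (endpoints (m + 1)) ⊆ arcs 0 m ↔ ∀ e ∈ E, ¬e.IsDiag := by
    simp only [Finset.subset_iff, Finset.forall_mem_map, endpoints_mem_arcs]
  rw [mem_rootedArcs, mem_connectedArcs, hsub, isNoncrossing_map_endpoints,
    ← connected_graphOf_iff, ← hasEdge1n_iff, IsNCC, IsNC]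
  simp only [and_assoc]

theorem coeff_edgeGenPoly_rootedArcs (m k : ℕ) :
    (edgeGenPoly (rootedArcs 0 m)).coeff k = nccEdge (m + 1) k := by
  classical
  have hE : edgeGenPoly (rootedArcs 0 m) =
      edgeGenPoly {E : Finset (Sym2 (Fin (m + 1))) | IsNCC E ∧ HasEdge1n E} :=
    edgeGenPoly_eq_of_map_mem_iff (endpoints (m + 1))
      (fun B hB => exists_map_endpoints_eq (subset_arcs_of_mem_rootedArcs hB))
      fun E => by rw [map_endpoints_mem_rootedArcs, Finset.mem_filter_univ]
  rw [hE, coeff_edgeGenPoly, nccEdge, Nat.card_eq_fintype_card, Fintype.card_subtype,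
    Finset.filter_filter]
  simp only [and_assoc, and_comm (a := HasEdge1n _)]

theorem nccEdge_add_nccEdge_succ (n k : ℕ) (hn : 2 ≤ n) :
    (nccEdge n k : ℤ) + nccEdge n (k + 1) =
      (PowerSeries.coeff (n - 1) connectedSeries).coeff k +
        (PowerSeries.coeff (n - 2) (connectedSeries ^ 2)).coeff k := by
  obtain ⟨m, rfl⟩ := Nat.exists_eq_add_of_le' hn
  rw [← coeff_edgeGenPoly_rootedArcs, ← coeff_edgeGenPoly_rootedArcs]
  exact coeff_rootedArcs_add_coeff_rootedArcs m k

end Transfer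

theorem stmt9_general (n k : ℕ) (hn : 3 ≤ n) (hk : 1 ≤ k) :
    (n - 1) * (n - 2) * (nccEdge n k + nccEdge n (k + 1)) =
      (n - 2) * (Nat.choose (3 * n - 3) (n + k) * Nat.choose (k - 1) (n - 2)) +
        (n - 1) * (2 * (Nat.choose (3 * n - 5) (n + k) * Nat.choose (k - 1) (n - 3))) := by
  have hsplit := nccEdge_add_nccEdge_succ n k (by lia)
  have hconnected := sub_one_mul_coeff_connectedSeries (by lia : 2 ≤ n) hk
  have htwo := sub_two_mul_coeff_connectedSeries_sq hn hk
  zify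
  linear_combination ((n - 1 : ℕ) : ℤ) * (n - 2 : ℕ) * hsplit +
    ((n - 2 : ℕ) : ℤ) * hconnected + ((n - 1 : ℕ) : ℤ) * htwo

/-- For `n ≥ 3` and `n-1 ≤ k ≤ 2n-4`: `f_{n,k} + f_{n,k+1} = c_{n,k} + d_{n,k}`,
stated multiplied through by `(n-1)(n-2)` to avoid the divisions in the formulas
`c_{n,k} = (1/(n-1))·C(3n-3, n+k)·C(k-1, n-2)` and
`d_{n,k} = (2/(n-2))·C(3n-5, n+k)·C(k-1, n-3)`. -/
theorem stmt9 (n k : ℕ) (hn : 3 ≤ n) (hnk : (n : ℤ) - 1 ≤ (k : ℤ))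
    (hk : (k : ℤ) ≤ 2 * (n : ℤ) - 4) :
    (n - 1) * (n - 2) * (nccEdge n k + nccEdge n (k + 1)) =
      (n - 2) * (Nat.choose (3 * n - 3) (n + k) * Nat.choose (k - 1) (n - 2)) +
        (n - 1) * (2 * (Nat.choose (3 * n - 5) (n + k) * Nat.choose (k - 1) (n - 3))) :=
  stmt9_general n k hn (by lia)
end
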